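/- arXiv:1206.3718 — 3 statements merged into one kernel-verified Lean document; each statement's English description precedes it below -/
import Mathlib

section
/- There exists a universal constant Δ₀ with the following property. Let m ≥ Δ₀ be a real number, let N, W, k be positive integers, let S be a finite set, and let γ be a real number with 1 ≤ γ ≤ 2. For each s ∈ S and i ∈ {1,…,k} let f_{s,i} : {1,…,W} → [0, m^{−1/8}] be a function and c(s,i) ∈ {1,…,N} a coordinate, such that: (i) for each fixed s, the coordinates c(s,1),…,c(s,k) are pairwise distinct; (ii) each f_{s,i} is either identically zero or has average value at least 1/m; (iii) for each coordinate j ∈ {1,…,N}, the number of s ∈ S for which there exists some i with c(s,i) = j and f_{s,i} not identically zero is at most m². For α ∈ {1,…,W}^N set Y_s(α) := Σ_{i=1}^{k} f_{s,i}(α_{c(s,i)}), and assume that for α chosen uniformly at random, E[Y_s(α)] ≤ γ for every s ∈ S. Then there exists a vector α ∈ {1,…,W}^N such that Y_s(α) ≤ γ + m^{−1/32} for every s ∈ S. -/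
/-!
By the Chernoff bound for sums of independent variables in `[0, m^(-1/8)]`, the bad event
`Y s > γ + m^(-1/32)` has probability at most `p = exp (-m^(1/16) / (4K))`, where `K` bounds all the
means. It is determined by the coordinates on which a nonzero `f s i` depends. There are at most
`K m` of these, since each contributes at least `1/m` to the mean of `Y s`, and each of them matters
for at most `m²` indices, so a bad event shares coordinates with at most `d = K m³` bad events and
is independent of the others. As `p` decays faster than every power of `m`, `4 p d ≤ 1` for large
`m`, and the Lovász Local Lemma gives a point outside all bad events.
-/

open MeasureTheory ProbabilityTheory Finset Filter
open scoped Topology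

section LocalLemma

variable {Ω S : Type*}

/-- The event that none of the events `A t` with `t ∈ T` occurs, as in the Lovász Local Lemma. -/
def avoiding (A : S → Set Ω) (T : Finset S) : Set Ω :=
  ⋂ t ∈ T, (A t)ᶜ

theorem mem_avoiding {A : S → Set Ω} {T : Finset S} {ω : Ω} :
    ω ∈ avoiding A T ↔ ∀ t ∈ T, ω ∉ A t := by
  simp only [avoiding, Set.mem_iInter, Set.mem_compl_iff]

theorem avoiding_anti {A : S → Set Ω} {T U : Finset S} (h : T ⊆ U) :
    avoiding A U ⊆ avoiding A T :=
  Set.biInter_subset_biInter_left h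

variable [MeasurableSpace Ω] {μ : Measure Ω} {A : S → Set Ω} {x : S → ℝ}

theorem measureReal_avoiding_le_add [DecidableEq S] [IsFiniteMeasure μ] (t : S) (T : Finset S) :
    μ.real (avoiding A T) ≤
      μ.real (avoiding A (insert t T)) + μ.real (A t ∩ avoiding A T) := by
  refine (measureReal_mono fun ω hω ↦ ?_).trans (measureReal_union_le _ _)
  rw [Set.mem_union, mem_avoiding, Finset.forall_mem_insert, ← mem_avoiding]
  by_cases h : ω ∈ A t
  · exact Or.inr ⟨h, hω⟩
  · exact Or.inl ⟨h, hω⟩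

theorem prod_one_sub_mul_measureReal_avoiding_le [DecidableEq S] [IsFiniteMeasure μ]
    (hx : ∀ s, x s ≤ 1) {R U : Finset S} (hRU : Disjoint R U)
    (h : ∀ T ⊂ R ∪ U, ∀ t ∉ T, μ.real (A t ∩ avoiding A T) ≤ x t * μ.real (avoiding A T)) :
    (∏ t ∈ U, (1 - x t)) * μ.real (avoiding A R) ≤ μ.real (avoiding A (R ∪ U)) := by
  induction U using Finset.induction_on with
  | empty => simp
  | insert t U htU ih =>
    rw [disjoint_insert_right] at hRU
    have ht : t ∉ R ∪ U := by simp [hRU.1, htU]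
    have hss : R ∪ U ⊂ R ∪ insert t U := by
      rw [union_insert]
      exact ssubset_insert ht
    calc (∏ u ∈ insert t U, (1 - x u)) * μ.real (avoiding A R)
        = (1 - x t) * ((∏ u ∈ U, (1 - x u)) * μ.real (avoiding A R)) := by
          rw [prod_insert htU, mul_assoc]
      _ ≤ (1 - x t) * μ.real (avoiding A (R ∪ U)) := by
          gcongr
          · exact sub_nonneg.2 (hx t)
          · exact ih hRU.2 fun T hT ↦ h T (hT.trans hss)
      _ ≤ μ.real (avoiding A (R ∪ insert t U)) := by
          rw [union_insert]
          linarith [measureReal_avoiding_le_add (μ := μ) (A := A) t (R ∪ U), h _ hss t ht]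

variable {Γ : S → Finset S}

theorem measureReal_inter_avoiding_le [IsFiniteMeasure μ] (hx : ∀ s, x s ∈ Set.Icc 0 1)
    (hA : ∀ s T, s ∉ T → Disjoint T (Γ s) → μ.real (A s ∩ avoiding A T) ≤
      x s * (∏ t ∈ Γ s, (1 - x t)) * μ.real (avoiding A T))
    (T : Finset S) {s : S} (hs : s ∉ T) :
    μ.real (A s ∩ avoiding A T) ≤ x s * μ.real (avoiding A T) := by
  classical
  induction T using Finset.strongInduction generalizing s with
  | H T ih =>
  calc μ.real (A s ∩ avoiding A T)
      ≤ μ.real (A s ∩ avoiding A (T \ Γ s)) :=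
        measureReal_mono (Set.inter_subset_inter_right _ (avoiding_anti sdiff_subset))
    _ ≤ x s * (∏ t ∈ Γ s, (1 - x t)) * μ.real (avoiding A (T \ Γ s)) :=
        hA s _ (fun h ↦ hs (sdiff_subset h)) sdiff_disjoint
    _ ≤ x s * (∏ t ∈ T ∩ Γ s, (1 - x t)) * μ.real (avoiding A (T \ Γ s)) := by
        have := (hx s).1
        gcongr ?_ * ?_ * _
        exact prod_le_prod_of_subset_of_le_one inter_subset_right
          (fun t _ ↦ sub_nonneg.2 (hx t).2) fun t _ _ ↦ sub_le_self 1 (hx t).1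
    _ ≤ x s * μ.real (avoiding A T) := by
        rw [mul_assoc]
        gcongr
        · exact (hx s).1
        · have hT : T \ Γ s ∪ T ∩ Γ s = T := sdiff_union_inter T (Γ s)
          conv_rhs => rw [← hT]
          refine prod_one_sub_mul_measureReal_avoiding_le (fun t ↦ (hx t).2)
            (disjoint_sdiff_inter T (Γ s)) ?_
          rw [hT]
          exact fun U hU t ht ↦ ih U hU ht

variable [IsProbabilityMeasure μ]

/-- The Lovász Local Lemma, in its lopsided form. -/
theorem prod_one_sub_le_measureReal_avoiding (hx : ∀ s, x s ∈ Set.Icc 0 1)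
    (hA : ∀ s T, s ∉ T → Disjoint T (Γ s) → μ.real (A s ∩ avoiding A T) ≤
      x s * (∏ t ∈ Γ s, (1 - x t)) * μ.real (avoiding A T)) (T : Finset S) :
    ∏ t ∈ T, (1 - x t) ≤ μ.real (avoiding A T) := by
  classical
  simpa [avoiding] using prod_one_sub_mul_measureReal_avoiding_le (μ := μ) (A := A)
    (fun t ↦ (hx t).2) (disjoint_empty_left T)
    fun U _ _ ht ↦ measureReal_inter_avoiding_le hx hA U ht

theorem exists_forall_notMem_of_card_le [Finite S] {p d : ℝ} (hp : ∀ s, μ.real (A s) ≤ p)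
    (hd : ∀ s, (#(Γ s) : ℝ) ≤ d) (hp_half : 2 * p < 1) (hpd : 4 * p * d ≤ 1)
    (hA : ∀ s T, s ∉ T → Disjoint T (Γ s) →
      μ.real (A s ∩ avoiding A T) ≤ μ.real (A s) * μ.real (avoiding A T)) :
    ∃ ω, ∀ s, ω ∉ A s := by
  cases nonempty_fintype S
  have hp_nonneg (s : S) : 0 ≤ p := measureReal_nonneg.trans (hp s)
  have hp_le (s : S) : p ≤ 2 * p * ∏ t ∈ Γ s, (1 - 2 * p) := by
    have bernoulli := one_add_mul_le_pow (by linarith [hp_nonneg s] : -2 ≤ -(2 * p)) #(Γ s)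
    have hcard : p * #(Γ s) ≤ p * d := mul_le_mul_of_nonneg_left (hd s) (hp_nonneg s)
    rw [prod_const, sub_eq_add_neg]
    nlinarith [hp_nonneg s]
  have hlower : ∏ _t : S, (1 - 2 * p) ≤ μ.real (avoiding A univ) := by
    refine prod_one_sub_le_measureReal_avoiding (Γ := Γ) (x := fun _ ↦ 2 * p)
      (fun s ↦ ⟨by linarith [hp_nonneg s], hp_half.le⟩) (fun s T hs hT ↦ ?_) univ
    exact (hA s T hs hT).trans (by gcongr; exact (hp s).trans (hp_le s))
  have hpos : 0 < μ.real (avoiding A univ) :=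
    (prod_pos fun _ _ ↦ sub_pos.2 hp_half).trans_le hlower
  obtain ⟨ω, hω⟩ := nonempty_of_measureReal_ne_zero hpos.ne'
  exact ⟨ω, fun s ↦ mem_avoiding.1 hω s (mem_univ s)⟩

end LocalLemma

theorem exists_forall_notMem_of_iIndep {Ω S ι : Type*} [Finite S] {mΩ : MeasurableSpace Ω}
    {μ : Measure Ω} [IsProbabilityMeasure μ] {m : ι → MeasurableSpace Ω} (hm : ∀ j, m j ≤ mΩ)
    (hindep : iIndep m μ) {V : S → Set ι} {A : S → Set Ω}
    (hA : ∀ s, MeasurableSet[⨆ j ∈ V s, m j] (A s)) {p d : ℝ} (hp : ∀ s, μ.real (A s) ≤ p)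
    (hd : ∀ s, ({t | ¬Disjoint (V s) (V t)}.ncard : ℝ) ≤ d) (hp_half : 2 * p < 1)
    (hpd : 4 * p * d ≤ 1) :
    ∃ ω, ∀ s, ω ∉ A s := by
  classical
  refine exists_forall_notMem_of_card_le (μ := μ)
    (Γ := fun s ↦ (Set.toFinite {t | ¬Disjoint (V s) (V t)}).toFinset) hp
    (fun s ↦ by simpa only [Set.ncard_eq_toFinset_card _ (Set.toFinite _)] using hd s) hp_half hpd
    fun s T _ hT ↦ ?_
  have hdisj : Disjoint (V s) (⋃ t ∈ T, V t) := by
    refine Set.disjoint_iUnion₂_right.2 fun t ht ↦ ?_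
    simpa using Finset.disjoint_left.1 hT ht
  have hle (t : S) (ht : t ∈ T) : ⨆ j ∈ V t, m j ≤ ⨆ j ∈ ⋃ t ∈ T, V t, m j :=
    biSup_mono fun _ hj ↦ Set.mem_biUnion ht hj
  have havoid : MeasurableSet[⨆ j ∈ ⋃ t ∈ T, V t, m j] (avoiding A T) :=
    Finset.measurableSet_biInter T fun t ht ↦ (hle t ht _ (hA t)).compl
  have hind := (Indep_iff _ _ μ).1 (indep_iSup_of_disjoint hm hindep hdisj) _ _ (hA s) havoid
  simp only [measureReal_def, hind, ENNReal.toReal_mul, le_refl]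

section Chernoff

variable {Ω : Type*} [MeasurableSpace Ω] {μ : Measure Ω} [IsProbabilityMeasure μ] {a : ℝ}

theorem exp_mul_le_one_add_of_mem_Icc (ha : 0 < a) (t : ℝ) {y : ℝ} (hy : y ∈ Set.Icc 0 a) :
    Real.exp (t * y) ≤ 1 + (Real.exp (t * a) - 1) / a * y := by
  have hconv := convexOn_exp.2 (Set.mem_univ 0) (Set.mem_univ (t * a))
    (sub_nonneg.2 ((div_le_one ha).2 hy.2)) (div_nonneg hy.1 ha.le) (sub_add_cancel 1 (y / a))
  have hpoint : t * y = y / a * (t * a) := by field_simp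
  simp only [smul_eq_mul, mul_zero, zero_add, Real.exp_zero, mul_one, ← hpoint] at hconv
  exact hconv.trans_eq (by ring)

theorem mgf_le_exp_mul_integral_of_mem_Icc (ha : 0 < a) {Y : Ω → ℝ} (hY : AEMeasurable Y μ)
    (hmem : ∀ᵐ ω ∂μ, Y ω ∈ Set.Icc 0 a) (t : ℝ) :
    mgf Y μ t ≤ Real.exp ((Real.exp (t * a) - 1) / a * μ[Y]) := by
  have hint : Integrable Y μ := .of_mem_Icc 0 a hY hmem
  calc mgf Y μ t
      ≤ ∫ ω, 1 + (Real.exp (t * a) - 1) / a * Y ω ∂μ := by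
        refine integral_mono_ae (integrable_exp_mul_of_mem_Icc hY hmem)
          ((integrable_const 1).add (hint.const_mul _)) ?_
        filter_upwards [hmem] with ω hω using exp_mul_le_one_add_of_mem_Icc ha t hω
    _ = (Real.exp (t * a) - 1) / a * μ[Y] + 1 := by
        rw [integral_add (integrable_const 1) (hint.const_mul _), integral_const_mul]
        simp [add_comm]
    _ ≤ _ := Real.add_one_le_exp _

variable {κ : Type*} [Fintype κ] {Y : κ → Ω → ℝ}

theorem measureReal_sum_ge_le_exp (hindep : iIndepFun Y μ) (hY : ∀ i, Measurable (Y i))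
    (ha : 0 < a) (hmem : ∀ i, ∀ᵐ ω ∂μ, Y i ω ∈ Set.Icc 0 a) (r : ℝ) {t : ℝ} (ht : 0 ≤ t) :
    μ.real {ω | r ≤ ∑ i, Y i ω} ≤
      Real.exp ((Real.exp (t * a) - 1) / a * ∑ i, μ[Y i] - t * r) := by
  have hint : Integrable (fun ω ↦ Real.exp (t * (∑ i, Y i) ω)) μ :=
    hindep.integrable_exp_mul_sum hY fun i _ ↦
      integrable_exp_mul_of_mem_Icc (hY i).aemeasurable (hmem i)
  calc μ.real {ω | r ≤ ∑ i, Y i ω}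
      ≤ Real.exp (-t * r) * mgf (∑ i, Y i) μ t := by
        simpa only [Finset.sum_apply] using measure_ge_le_exp_mul_mgf r ht hint
    _ = Real.exp (-t * r) * ∏ i, mgf (Y i) μ t := by rw [hindep.mgf_sum hY]
    _ ≤ Real.exp (-t * r) * ∏ i, Real.exp ((Real.exp (t * a) - 1) / a * μ[Y i]) := by
        gcongr with i
        · exact fun i _ ↦ mgf_nonneg
        · exact mgf_le_exp_mul_integral_of_mem_Icc ha (hY i).aemeasurable (hmem i) t
    _ = _ := by
        rw [← Real.exp_sum, ← Finset.mul_sum, ← Real.exp_add]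
        ring_nf

/-- The Chernoff bound for independent summands in `[0, a]` and deviations `δ` of at most the
order of the mean. -/
theorem measureReal_mean_add_le_sum_le_exp (hindep : iIndepFun Y μ)
    (hY : ∀ i, Measurable (Y i)) (ha : 0 < a)
    (hmem : ∀ i, ∀ᵐ ω ∂μ, Y i ω ∈ Set.Icc 0 a) {K δ : ℝ} (hK : 0 < K)
    (hmean : ∑ i, μ[Y i] ≤ K) (hδ : 0 ≤ δ) (hδK : δ ≤ 2 * K) :
    μ.real {ω | ∑ i, μ[Y i] + δ ≤ ∑ i, Y i ω} ≤ Real.exp (-(δ ^ 2 / (4 * K * a))) := by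
  -- `u = δ / (2K)` minimises the exponent `(K u² - δ u) / a`.
  set u : ℝ := δ / (2 * K) with hu
  set M : ℝ := ∑ i, μ[Y i]
  have hu0 : 0 ≤ u := by positivity
  have hu1 : u ≤ 1 := (div_le_one (by positivity)).2 hδK
  have hM : 0 ≤ M := sum_nonneg fun i _ ↦
    integral_nonneg_of_ae ((hmem i).mono fun _ h ↦ h.1)
  refine (measureReal_sum_ge_le_exp hindep hY ha hmem (M + δ)
    (div_nonneg hu0 ha.le)).trans (Real.exp_le_exp.2 ?_)
  have hexp : Real.exp u - 1 ≤ u + u ^ 2 := by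
    linarith [(abs_le.1 (Real.abs_exp_sub_one_sub_id_le (abs_le.2 ⟨by linarith, hu1⟩))).2]
  calc (Real.exp (u / a * a) - 1) / a * M - u / a * (M + δ)
      = ((Real.exp u - 1) * M - u * (M + δ)) / a := by
        rw [div_mul_cancel₀ u ha.ne']
        ring
    _ ≤ ((u + u ^ 2) * M - u * (M + δ)) / a := by gcongr
    _ = (u ^ 2 * M - u * δ) / a := by ring
    _ ≤ (u ^ 2 * K - u * δ) / a := by gcongr
    _ = -(δ ^ 2 / (4 * K * a)) := by
        rw [hu]
        field_simp
        ring

end Chernoff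

section ActiveCoords

variable {κ ι S : Type*}

/-- The coordinates that matter to a sum `∑ i, f i (α (c i))`: those read by some `f i` that is not
identically zero. -/
def activeCoords {E : ι → Type*} {c : κ → ι} (f : ∀ i, E (c i) → ℝ) : Set ι :=
  {j | ∃ i, c i = j ∧ f i ≠ 0}

theorem finite_activeCoords [Finite κ] {E : ι → Type*} {c : κ → ι} (f : ∀ i, E (c i) → ℝ) :
    (activeCoords f).Finite :=
  (Set.finite_range c).subset fun _ ⟨i, hi, _⟩ ↦ ⟨i, hi⟩

theorem ncard_activeCoords_mul_le [Fintype κ] {E : ι → Type*} {c : κ → ι}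
    {f : ∀ i, E (c i) → ℝ} {M : κ → ℝ} {b : ℝ} (hb : 0 ≤ b) (hM : ∀ i, 0 ≤ M i)
    (hbM : ∀ i, f i = 0 ∨ b ≤ M i) : (activeCoords f).ncard * b ≤ ∑ i, M i := by
  classical
  have himage : activeCoords f = c '' ({i | f i ≠ 0} : Finset κ) := by
    ext j
    simp [activeCoords, and_comm]
  calc ((activeCoords f).ncard : ℝ) * b
      ≤ #{i | f i ≠ 0} * b := by
        gcongr
        rw [himage]
        exact (Set.ncard_image_le (finite_toSet _)).trans_eq (Set.ncard_coe_finset _)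
    _ ≤ ∑ i with f i ≠ 0, M i := by
        rw [← nsmul_eq_mul]
        exact card_nsmul_le_sum _ _ _ fun i hi ↦ (hbM i).resolve_left (mem_filter.1 hi).2
    _ ≤ ∑ i, M i := sum_le_univ_sum_of_nonneg hM

theorem ncard_not_disjoint_le {V : S → Set ι} {U : Set ι} (hU : U.Finite) {D : ℝ}
    (hD : ∀ j, ({t | j ∈ V t}.ncard : ℝ) ≤ D) :
    ({t | ¬Disjoint U (V t)}.ncard : ℝ) ≤ U.ncard * D := by
  lift U to Finset ι using hU
  have hunion : {t | ¬Disjoint (U : Set ι) (V t)} = ⋃ j ∈ U, {t | j ∈ V t} := by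
    ext t
    simp [Set.not_disjoint_iff]
  calc ({t | ¬Disjoint (U : Set ι) (V t)}.ncard : ℝ)
      ≤ ∑ j ∈ U, ({t | j ∈ V t}.ncard : ℝ) := by
        rw [hunion]
        exact_mod_cast U.set_ncard_biUnion_le fun j ↦ {t | j ∈ V t}
    _ ≤ (U : Set ι).ncard * D := by
        rw [Set.ncard_coe_finset, ← nsmul_eq_mul]
        exact sum_le_card_nsmul _ _ _ fun j _ ↦ hD j

theorem measurable_sum_iSup_activeCoords [Fintype κ] {Ω : Type*} {E : ι → Type*}
    [∀ j, MeasurableSpace (E j)] (X : ∀ j, Ω → E j) {c : κ → ι} {f : ∀ i, E (c i) → ℝ}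
    (hf : ∀ i, Measurable (f i)) :
    Measurable[⨆ j ∈ activeCoords f, MeasurableSpace.comap (X j) inferInstance]
      fun ω ↦ ∑ i, f i (X (c i) ω) := by
  refine Finset.measurable_fun_sum _ fun i _ ↦ ?_
  by_cases hi : f i = 0
  · simp only [hi, Pi.zero_apply, measurable_const]
  · exact ((hf i).comp (comap_measurable (X (c i)))).mono
      (le_iSup₂_of_le (c i) ⟨i, rfl, hi⟩ le_rfl) le_rfl

end ActiveCoords

section WaitingTimes

theorem tendsto_pow_mul_exp_neg_mul_rpow_atTop (n : ℕ) {a b : ℝ} (ha : 0 < a) (hb : 0 < b) :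
    Tendsto (fun x : ℝ ↦ x ^ n * Real.exp (-b * x ^ a)) atTop (𝓝 0) := by
  refine ((tendsto_rpow_mul_exp_neg_mul_atTop_nhds_zero (n / a) b hb).comp
    (tendsto_rpow_atTop ha)).congr' ?_
  filter_upwards [eventually_ge_atTop 0] with x hx
  rw [Function.comp_apply, ← Real.rpow_mul hx, mul_div_cancel₀ _ ha.ne', Real.rpow_natCast]

/-- The Chernoff bound for the probability of a bad event: the deviation is `m^(-1/32)`, the
summands are at most `m^(-1/8)` and the mean is at most `K`. -/
noncomputable def badEventBound (K m : ℝ) : ℝ :=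
  Real.exp (-((m ^ (-(1 : ℝ) / 32)) ^ 2 / (4 * K * m ^ (-(1 : ℝ) / 8))))

theorem tendsto_pow_mul_badEventBound {K : ℝ} (hK : 0 < K) (n : ℕ) :
    Tendsto (fun m ↦ m ^ n * badEventBound K m) atTop (𝓝 0) := by
  refine (tendsto_pow_mul_exp_neg_mul_rpow_atTop n (a := 1 / 16) (b := 1 / (4 * K))
    (by norm_num) (by positivity)).congr' ?_
  filter_upwards [eventually_gt_atTop 0] with m hm
  have hpow : (m ^ (-(1 : ℝ) / 32)) ^ 2 = m ^ ((1 : ℝ) / 16) * m ^ (-(1 : ℝ) / 8) := by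
    rw [← Real.rpow_natCast, ← Real.rpow_mul hm.le, ← Real.rpow_add hm]
    norm_num
  rw [badEventBound, hpow, mul_div_mul_right _ _ (by positivity)]
  ring_nf

theorem eventually_badEventBound_small {K : ℝ} (hK : 0 < K) : ∀ᶠ m : ℝ in atTop,
    m ^ (-(1 : ℝ) / 32) ≤ 2 * K ∧ 2 * badEventBound K m < 1 ∧
      4 * badEventBound K m * (K * m ^ 3) ≤ 1 := by
  have hdev : Tendsto (fun m : ℝ ↦ m ^ (-(1 : ℝ) / 32)) atTop (𝓝 0) := by
    simpa only [neg_div] using tendsto_rpow_neg_atTop (by norm_num : (0 : ℝ) < 1 / 32)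
  filter_upwards [hdev.eventually_le_const (by positivity : 0 < 2 * K),
    (tendsto_pow_mul_badEventBound hK 0).eventually_lt_const one_half_pos,
    (tendsto_pow_mul_badEventBound hK 3).eventually_le_const (by positivity : 0 < 1 / (4 * K))]
    with m hδ hhalf hcube
  rw [le_div_iff₀ (by positivity)] at hcube
  exact ⟨hδ, by linarith, by linarith⟩

theorem measureReal_add_lt_sum_comp_le {Ω κ ι : Type*} [MeasurableSpace Ω] {μ : Measure Ω}
    [IsProbabilityMeasure μ] [Fintype κ] {E : ι → Type*} [∀ j, MeasurableSpace (E j)]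
    {X : ∀ j, Ω → E j} (hX : ∀ j, Measurable (X j)) (hindep : iIndepFun X μ) {c : κ → ι}
    (hc : Function.Injective c) {f : ∀ i, E (c i) → ℝ} (hf : ∀ i, Measurable (f i)) {a : ℝ}
    (ha : 0 < a) (hmem : ∀ i w, f i w ∈ Set.Icc 0 a) {γ K δ : ℝ} (hK : 0 < K)
    (hmean : ∑ i, ∫ ω, f i (X (c i) ω) ∂μ ≤ γ) (hγ : γ ≤ K) (hδ : 0 ≤ δ) (hδK : δ ≤ 2 * K) :
    μ.real {ω | γ + δ < ∑ i, f i (X (c i) ω)} ≤ Real.exp (-(δ ^ 2 / (4 * K * a))) := by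
  refine le_trans (measureReal_mono fun ω hω ↦ ?_) (measureReal_mean_add_le_sum_le_exp
    ((hindep.precomp hc).comp f hf) (fun i ↦ (hf i).comp (hX (c i))) ha
    (fun i ↦ ae_of_all μ fun ω ↦ hmem i (X (c i) ω)) hK (hmean.trans hγ) hδ hδK)
  exact (add_le_add_left hmean δ).trans (le_of_lt hω)

universe u v w x y

theorem exists_good_waiting_times_general {K : ℝ} (hK : 0 < K) :
    ∃ Δ₀ : ℝ, ∀ m : ℝ, Δ₀ ≤ m →
    ∀ {Ω : Type u} [MeasurableSpace Ω] {μ : Measure Ω} [IsProbabilityMeasure μ]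
      {ι : Type v} {E : ι → Type w} [∀ j, MeasurableSpace (E j)] {X : ∀ j, Ω → E j}
      {S : Type x} [Finite S] {κ : Type y} [Fintype κ] {c : S → κ → ι}
      {f : ∀ s i, E (c s i) → ℝ} {γ : ℝ},
      γ ≤ K →
      (∀ j, Measurable (X j)) →
      iIndepFun X μ →
      (∀ s i, Measurable (f s i)) →
      (∀ s i w, f s i w ∈ Set.Icc 0 (m ^ (-(1 : ℝ) / 8))) →
      (∀ s, Function.Injective (c s)) →
      (∀ s i, f s i = 0 ∨ 1 / m ≤ ∫ ω, f s i (X (c s i) ω) ∂μ) →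
      (∀ j, ({s | ∃ i, c s i = j ∧ f s i ≠ 0}.ncard : ℝ) ≤ m ^ 2) →
      (∀ s, ∫ ω, ∑ i, f s i (X (c s i) ω) ∂μ ≤ γ) →
      ∃ ω, ∀ s, ∑ i, f s i (X (c s i) ω) ≤ γ + m ^ (-(1 : ℝ) / 32) := by
  obtain ⟨Δ₀, hΔ₀⟩ := eventually_atTop.1
    ((eventually_badEventBound_small hK).and (eventually_gt_atTop 0))
  refine ⟨Δ₀, fun m hm Ω _ μ _ ι E _ X S _ κ _ c f γ hγ hX hindep hf hmem hc havg hdeg hmean ↦ ?_⟩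
  obtain ⟨⟨hδ, hp, hpd⟩, hm0⟩ := hΔ₀ m hm
  have hsum (s : S) : ∑ i, ∫ ω, f s i (X (c s i) ω) ∂μ ≤ γ := by
    rw [← integral_finsetSum]
    · exact hmean s
    · exact fun i _ ↦ .of_mem_Icc 0 _ ((hf s i).comp (hX _)).aemeasurable
        (ae_of_all μ fun ω ↦ hmem s i _)
  have hnbr (s : S) :
      ({t | ¬Disjoint (activeCoords (f s)) (activeCoords (f t))}.ncard : ℝ) ≤ K * m ^ 3 := by
    have hactive := ncard_activeCoords_mul_le (one_div_nonneg.2 hm0.le)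
      (fun i ↦ integral_nonneg fun ω ↦ (hmem s i (X (c s i) ω)).1) (havg s)
    calc _ ≤ ((activeCoords (f s)).ncard : ℝ) * m ^ 2 :=
          ncard_not_disjoint_le (finite_activeCoords (f s)) hdeg
      _ = (activeCoords (f s)).ncard * (1 / m) * m ^ 3 := by field_simp
      _ ≤ K * m ^ 3 := by
          gcongr
          exact hactive.trans ((hsum s).trans hγ)
  obtain ⟨ω, hω⟩ := exists_forall_notMem_of_iIndep (fun j ↦ (hX j).comap_le) hindep
    (fun s ↦ measurableSet_lt measurable_const (measurable_sum_iSup_activeCoords X (hf s)))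
    (fun s ↦ measureReal_add_lt_sum_comp_le hX hindep (hc s) (hf s) (by positivity) (hmem s) hK
      (hsum s) hγ (by positivity) hδ) hnbr hp hpd
  exact ⟨ω, fun s ↦ not_lt.1 (hω s)⟩

theorem integral_uniformOn_univ {α : Type*} [Fintype α] [MeasurableSpace α]
    [DiscreteMeasurableSpace α] (g : α → ℝ) :
    ∫ w, g w ∂uniformOn Set.univ = (∑ w, g w) / Fintype.card α := by
  simp [uniformOn, ProbabilityTheory.cond, div_eq_inv_mul]

theorem integral_pi_uniformOn_univ {ι α : Type*} [Fintype ι] [DecidableEq ι] [Fintype α]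
    [MeasurableSpace α] [DiscreteMeasurableSpace α] (g : (ι → α) → ℝ) :
    ∫ w, g w ∂Measure.pi (fun _ ↦ uniformOn Set.univ) =
      (∑ w, g w) / (Fintype.card α : ℝ) ^ Fintype.card ι := by
  rw [← uniformOn_pi, Set.pi_univ, integral_uniformOn_univ, Fintype.card_fun, Nat.cast_pow]

end WaitingTimes

/-- The key derandomization lemma: if each `Y s` is a sum of
independent per-coordinate contributions `f s i` bounded by `m^(-1/8)`, each
nonzero `f s i` has average at least `1/m`, each coordinate is relevant for at
most `m²` indices `s`, and `E[Y s] ≤ γ` with `1 ≤ γ ≤ 2`, then (for `m` at least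
a universal constant `Δ₀`) there is a single vector `α` with
`Y s α ≤ γ + m^(-1/32)` for all `s`. -/
theorem exists_good_waiting_times :
    ∃ Δ₀ : ℝ, ∀ (m : ℝ), Δ₀ ≤ m →
    ∀ (N W k : ℕ), 0 < N → 0 < W → 0 < k →
    ∀ (S : Type) [Fintype S],
    ∀ (γ : ℝ), 1 ≤ γ → γ ≤ 2 →
    ∀ (f : S → Fin k → Fin W → ℝ) (c : S → Fin k → Fin N),
      (∀ s i w, 0 ≤ f s i w ∧ f s i w ≤ m ^ (-(1 : ℝ) / 8)) →
      (∀ s, Function.Injective (c s)) →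
      (∀ s i, (∀ w, f s i w = 0) ∨ 1 / m ≤ (∑ w, f s i w) / (W : ℝ)) →
      (∀ j : Fin N,
        (Nat.card {s : S | ∃ i, c s i = j ∧ ¬(∀ w, f s i w = 0)} : ℝ) ≤ m ^ 2) →
      (∀ s : S,
        (∑ α : Fin N → Fin W, ∑ i, f s i (α (c s i))) / ((W : ℝ) ^ N) ≤ γ) →
      ∃ α : Fin N → Fin W, ∀ s : S,
        ∑ i, f s i (α (c s i)) ≤ γ + m ^ (-(1 : ℝ) / 32) := by
  obtain ⟨Δ₀, hΔ₀⟩ := exists_good_waiting_times_general two_pos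
  refine ⟨Δ₀, fun m hm N W k _ hW _ S _ γ _ hγ f c hf hc havg hdeg hmean ↦ ?_⟩
  have : Nonempty (Fin W) := ⟨⟨0, hW⟩⟩
  have : IsProbabilityMeasure (uniformOn (Set.univ : Set (Fin W))) :=
    isProbabilityMeasure_uniformOn Set.finite_univ Set.univ_nonempty
  refine hΔ₀ m hm (μ := Measure.pi fun _ ↦ uniformOn Set.univ) hγ measurable_pi_apply
    (iIndepFun_pi fun _ ↦ aemeasurable_id) (fun _ _ ↦ .of_discrete) hf hc (fun s i ↦ ?_)
    (fun j ↦ ?_) fun s ↦ ?_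
  · rw [integral_comp_eval Measurable.of_discrete.aestronglyMeasurable, integral_uniformOn_univ,
      Fintype.card_fin, funext_iff]
    exact havg s i
  · simp only [ne_eq, funext_iff, Pi.zero_apply, ← Nat.card_coe_set_eq]
    exact hdeg j
  · simpa [integral_pi_uniformOn_univ] using hmean s
end

section
/- There exist constants c > 0 and n₀ ∈ ℕ such that for every n ≥ n₀ the following holds: if π₁, …, π_n are independent, uniformly random permutations of {1,…,n}, then with probability at least 1 − e^{−c·n²}, the routing instance I(π₁,…,π_n) admits no feasible schedule (load at most 1) with makespan at most 3.000032·n, even if packets may wait arbitrarily long at any node. -/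
/-- A routing instance: a finite directed multigraph together with packets
`0,…,k-1`, where packet `i` is given a list of edges `path i`. -/
structure RInst where
  V : Type
  E : Type
  [fintE : Fintype E]
  src : E → V
  dst : E → V
  k : ℕ
  path : Fin k → List E

attribute [instance] RInst.fintE

namespace RInst

/-- The paths are directed paths (consecutive edges fit head-to-tail) and
use no edge more than once. -/
def Valid (I : RInst) : Prop :=
  (∀ i, List.Chain' (fun e f => I.dst e = I.src f) (I.path i)) ∧
  (∀ i, (I.path i).Nodup)

/-- `σ i t` is the number of edges of `path i` traversed by time `t`. -/
def IsSchedule (I : RInst) (σ : Fin I.k → ℕ → ℕ) : Prop :=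
  (∀ i, σ i 0 = 0) ∧
  (∀ i t, σ i (t + 1) = σ i t ∨ σ i (t + 1) = σ i t + 1) ∧
  (∀ i t, σ i t ≤ (I.path i).length)

/-- Packet `i` crosses edge `e` in time step `t+1`. -/
def Crosses (I : RInst) (σ : Fin I.k → ℕ → ℕ) (i : Fin I.k) (e : I.E) (t : ℕ) : Prop :=
  σ i (t + 1) = σ i t + 1 ∧ (I.path i)[σ i t]? = some e

/-- The load of the schedule is at most `c`: in every time step every edge
is crossed by at most `c` packets. -/
def LoadLE (I : RInst) (σ : Fin I.k → ℕ → ℕ) (c : ℕ) : Prop :=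
  ∀ (e : I.E) (t : ℕ), Nat.card {i : Fin I.k | I.Crosses σ i e t} ≤ c

/-- All packets have arrived by time `T` (i.e. the makespan is at most `T`). -/
def CompletedBy (I : RInst) (σ : Fin I.k → ℕ → ℕ) (T : ℕ) : Prop :=
  ∀ i, σ i T = (I.path i).length

/-- The congestion: the maximum number of paths using a common edge. -/
noncomputable def congestion (I : RInst) : ℕ :=
  Finset.univ.sup fun e : I.E => Nat.card {i : Fin I.k | e ∈ I.path i}

/-- The dilation: the maximum length of a path. -/
noncomputable def dilation (I : RInst) : ℕ :=
  Finset.univ.sup fun i : Fin I.k => (I.path i).length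

end RInst

/-! ### The lower-bound instance `I(π₁,…,π_n)` on the graph `G_n` -/

/-- Vertices of `G_n`: `s`, `s'`, `u_1,…,u_{n+1}`, `v_1,…,v_n`, `t`.
(`Fin (n+1)` indexes `u_1,…,u_{n+1}`, `Fin n` indexes `v_1,…,v_n`.) -/
def Vtx (n : ℕ) : Type := Unit ⊕ Unit ⊕ Fin (n + 1) ⊕ Fin n ⊕ Unit

def Vtx.s {n : ℕ} : Vtx n := Sum.inl ()
def Vtx.s' {n : ℕ} : Vtx n := Sum.inr (Sum.inl ())
def Vtx.u {n : ℕ} (j : Fin (n + 1)) : Vtx n := Sum.inr (Sum.inr (Sum.inl j))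
def Vtx.v {n : ℕ} (j : Fin n) : Vtx n := Sum.inr (Sum.inr (Sum.inr (Sum.inl j)))
def Vtx.t {n : ℕ} : Vtx n := Sum.inr (Sum.inr (Sum.inr (Sum.inr ())))

/-- Edges of `G_n`: `(s,s')`, the edges `(s',u_j)` for `1 ≤ j ≤ n`, the critical
edges `e_j = (u_j,v_j)` for `1 ≤ j ≤ n`, the back edges `(v_j,u_{j'})` for
`j' ≠ j`, and `(u_{n+1},t)`. -/
def Edg (n : ℕ) : Type :=
  Unit ⊕ Fin n ⊕ Fin n ⊕ { p : Fin n × Fin (n + 1) // (p.1 : ℕ) ≠ (p.2 : ℕ) } ⊕ Unit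

instance (n : ℕ) : Fintype (Edg n) := by unfold Edg; infer_instance
instance (n : ℕ) : DecidableEq (Edg n) := by unfold Edg; infer_instance

def Edg.start {n : ℕ} : Edg n := Sum.inl ()
def Edg.toU {n : ℕ} (j : Fin n) : Edg n := Sum.inr (Sum.inl j)
def Edg.crit {n : ℕ} (j : Fin n) : Edg n := Sum.inr (Sum.inr (Sum.inl j))
def Edg.back {n : ℕ} (j : Fin n) (j' : Fin (n + 1)) (h : (j : ℕ) ≠ (j' : ℕ)) : Edg n :=
  Sum.inr (Sum.inr (Sum.inr (Sum.inl ⟨(j, j'), h⟩)))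
def Edg.toT {n : ℕ} : Edg n := Sum.inr (Sum.inr (Sum.inr (Sum.inr ())))

def Edg.src {n : ℕ} : Edg n → Vtx n
  | Sum.inl _ => Vtx.s
  | Sum.inr (Sum.inl _) => Vtx.s'
  | Sum.inr (Sum.inr (Sum.inl j)) => Vtx.u j.castSucc
  | Sum.inr (Sum.inr (Sum.inr (Sum.inl p))) => Vtx.v p.1.1
  | Sum.inr (Sum.inr (Sum.inr (Sum.inr _))) => Vtx.u (Fin.last n)

def Edg.dst {n : ℕ} : Edg n → Vtx n
  | Sum.inl _ => Vtx.s'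
  | Sum.inr (Sum.inl j) => Vtx.u j.castSucc
  | Sum.inr (Sum.inr (Sum.inl j)) => Vtx.v j
  | Sum.inr (Sum.inr (Sum.inr (Sum.inl p))) => Vtx.u p.1.2
  | Sum.inr (Sum.inr (Sum.inr (Sum.inr _))) => Vtx.t

/-- The `u`-vertex visited after crossing the `(i+1)`-st critical edge on the
path of `π`: it is `u_{π(i+2)}` (0-based: `(π (i+1)).castSucc`), except after the
last critical edge, where it is `u_{n+1}` (0-based: `Fin.last n`). -/
def nxt {n : ℕ} (π : Equiv.Perm (Fin n)) (i : Fin n) : Fin (n + 1) :=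
  if h : (i : ℕ) + 1 < n then (π ⟨(i : ℕ) + 1, h⟩).castSucc else Fin.last n

theorem nxt_ne {n : ℕ} (π : Equiv.Perm (Fin n)) (i : Fin n) :
    ((π i : ℕ)) ≠ ((nxt π i : ℕ)) := by
  by_cases h : (i : ℕ) + 1 < n
  · simp only [nxt, dif_pos h, Fin.coe_castSucc]
    intro he
    have h2 : π i = π ⟨(i : ℕ) + 1, h⟩ := Fin.val_injective he
    have h4 : (i : ℕ) = (i : ℕ) + 1 := congrArg Fin.val (π.injective h2)
    omega
  · simp only [nxt, dif_neg h, Fin.val_last]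
    exact Nat.ne_of_lt (π i).isLt

/-- The path `P(π) = s, s', u_{π(1)}, v_{π(1)}, u_{π(2)}, v_{π(2)}, …, u_{π(n)},
v_{π(n)}, u_{n+1}, t` as a list of `2n+3` edges (for `n ≥ 1`). -/
def pathOf {n : ℕ} (π : Equiv.Perm (Fin n)) : List (Edg n) :=
  if h : 0 < n then
    Edg.start :: Edg.toU (π ⟨0, h⟩) ::
      ((List.ofFn fun i : Fin n =>
          [Edg.crit (π i), Edg.back (π i) (nxt π i) (nxt_ne π i)]).flatten ++ [Edg.toT])
  else []

/-- The routing instance `I(π₁,…,π_n)`: the `n` packets with paths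
`P(π₁),…,P(π_n)` through `G_n`. -/
def lowerBoundInstance (n : ℕ) (πs : Fin n → Equiv.Perm (Fin n)) : RInst where
  V := Vtx n
  E := Edg n
  src := Edg.src
  dst := Edg.dst
  k := n
  path i := pathOf (πs i)

/-!
Look only at the times at which the packets cross their critical edges. The packets cross `(s, s')`
at `n` distinct times and `(u_{n+1}, t)` at `n` distinct times, and every path has `2 * n + 3`
edges. Hence, in a schedule of makespan at most `3.000032 * n`, the packets wait for at most
`0.000032 * n ^ 2` steps in total between these two crossings, and so few delay vectors are possible
that there are at most `exp (n ^ 2 / 250)` timings.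

On the other hand, a fixed timing fits only an `exp (-n ^ 2 / 200)` fraction of all tuples. Its
`n ^ 2` crossings fall into at most `4 * n` time steps, so by Cauchy–Schwarz about `n ^ 3 / 8` pairs
of crossings are simultaneous. Reveal the permutations one by one: each such pair forbids a critical
edge to the later packet at one position, and a permutation of `n` elements with about `n ^ 2 / 8`
forbidden position-value pairs has probability at most `exp (-c * n)`. A union bound over the
timings concludes.
-/

open Finset Filter

/-! ### Counting tuples and permutations -/

theorem card_le_prod_of_card_extensions_le {R : Type*} [CommSemiring R] [PartialOrder R]
    [IsOrderedRing R] {N : ℕ} {A : Type*} [DecidableEq A] (S : Finset (Fin N → A))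
    {g : Fin N → R} (hg : ∀ i, 0 ≤ g i)
    (h : ∀ p ∈ S, ∀ i, (#({q ∈ S | ∀ a < i, q a = p a}.image (· i)) : R) ≤ g i) :
    (#S : R) ≤ ∏ i, g i := by
  classical
  induction N with
  | zero => simpa using Nat.mono_cast (α := R) (card_le_univ S)
  | succ N ih =>
    have hprefixes : (#(S.image Fin.init) : R) ≤ ∏ i : Fin N, g i.castSucc := by
      refine ih _ (fun i => hg i.castSucc) ?_
      simp only [forall_mem_image]
      refine fun p hp i => le_trans (Nat.mono_cast (card_le_card ?_)) (h p hp i.castSucc)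
      intro x hx
      simp only [mem_image, mem_filter] at hx ⊢
      obtain ⟨_, ⟨⟨q, hq, rfl⟩, hqp⟩, rfl⟩ := hx
      refine ⟨q, ⟨hq, fun a ha => ?_⟩, rfl⟩
      obtain ⟨a, rfl⟩ := Fin.exists_castSucc_eq.2 (ha.trans (Fin.castSucc_lt_last i)).ne
      exact hqp a (Fin.castSucc_lt_castSucc_iff.1 ha)
    have hextensions :
        ∀ r ∈ S.image Fin.init, (#{q ∈ S | Fin.init q = r} : R) ≤ g (Fin.last N) := by
      simp only [forall_mem_image]
      refine fun p hp => le_trans (Nat.mono_cast ?_) (h p hp (Fin.last N))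
      refine card_le_card_of_injOn (· (Fin.last N)) (fun q hq => ?_) fun q hq q' hq' hlast => ?_
      · obtain ⟨hqS, hqp⟩ := mem_filter.1 hq
        refine mem_image_of_mem _ (mem_filter.2 ⟨hqS, fun a ha => ?_⟩)
        obtain ⟨a, rfl⟩ := Fin.exists_castSucc_eq.2 ha.ne
        exact congrFun hqp a
      · have hinit : Fin.init q = Fin.init q' := (mem_filter.1 hq).2.trans (mem_filter.1 hq').2.symm
        rw [← Fin.snoc_init_self q, ← Fin.snoc_init_self q', hinit]
        exact congrArg _ hlast
    calc (#S : R) = ∑ r ∈ S.image Fin.init, (#{q ∈ S | Fin.init q = r} : R) := by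
          rw [card_eq_sum_card_image Fin.init S, Nat.cast_sum]
      _ ≤ #(S.image Fin.init) * g (Fin.last N) := by
          simpa using sum_le_card_nsmul _ _ _ hextensions
      _ ≤ (∏ i : Fin N, g i.castSucc) * g (Fin.last N) := by gcongr; exact hg _
      _ = ∏ i, g i := (Fin.prod_univ_castSucc g).symm

-- The right-hand side, averaged over all cyclic rotations `e`, is the left-hand side.
theorem exists_perm_card_mul_sum_le {R : Type*} [CommSemiring R] [LinearOrder R]
    [IsStrictOrderedRing R] {n : ℕ} (s : Finset (Fin n)) (f : Fin n → R) :
    ∃ e : Equiv.Perm (Fin n), #s * ∑ j, f j ≤ n * ∑ k ∈ s, f (e k) := by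
  rcases Nat.eq_zero_or_pos n with rfl | hn
  · exact ⟨1, by simp⟩
  have : NeZero n := ⟨hn.ne'⟩
  have hrotations : ∑ _c : Fin n, #s * ∑ j, f j = ∑ c : Fin n, n * ∑ k ∈ s, f (k + c) := by
    have hrow (k : Fin n) : ∑ c, f (k + c) = ∑ j, f j := Equiv.sum_comp (Equiv.addLeft k) f
    rw [← mul_sum univ _ (n : R), sum_comm]
    simp only [hrow, sum_const, card_univ, Fintype.card_fin, nsmul_eq_mul]
  obtain ⟨c, -, hc⟩ := exists_le_of_sum_le univ_nonempty hrotations.le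
  exact ⟨Equiv.addRight c, hc⟩

theorem card_perm_avoiding_le_prod {n : ℕ} (F : Fin n → Finset (Fin n)) (e : Equiv.Perm (Fin n)) :
    #{π : Equiv.Perm (Fin n) | ∀ j, π j ∉ F j} ≤ ∏ k : Fin n, (n - max (k : ℕ) #(F (e k))) := by
  let S : Finset (Fin n → Fin n) := {p | p.Injective ∧ ∀ k, p k ∉ F (e k)}
  have hS : #S ≤ ∏ k : Fin n, (n - max (k : ℕ) #(F (e k))) := by
    refine card_le_prod_of_card_extensions_le (R := ℕ) S (fun _ => Nat.zero_le _) ?_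
    intro p hp k
    have hinj : p.Injective := (mem_filter.1 hp).2.1
    have hused : #((Iio k).image p) = k := by
      rw [card_image_of_injective _ hinj, Fin.card_Iio]
    have hvalues : ∀ x ∈ {q ∈ S | ∀ a < k, q a = p a}.image (· k),
        x ∉ (Iio k).image p ∧ x ∉ F (e k) := by
      simp only [forall_mem_image, mem_filter, mem_univ, true_and, S]
      rintro q ⟨⟨hq, hqF⟩, hqp⟩
      refine ⟨fun hx => ?_, hqF k⟩
      obtain ⟨a, ha, hak⟩ := mem_image.1 hx
      have ha := mem_Iio.1 ha
      exact ha.ne (hq ((hqp a ha).trans hak))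
    have hbound : ∀ U : Finset (Fin n), (∀ x ∈ {q ∈ S | ∀ a < k, q a = p a}.image (· k), x ∉ U) →
        #({q ∈ S | ∀ a < k, q a = p a}.image (· k)) ≤ n - #U := fun U hU => by
      simpa [card_compl] using card_le_card (t := Uᶜ) fun x hx => mem_compl.2 (hU x hx)
    have hk := hbound _ fun x hx => (hvalues x hx).1
    have hF := hbound _ fun x hx => (hvalues x hx).2
    rw [hused] at hk
    rw [Nat.cast_id]
    omega
  refine le_trans (card_le_card_of_injOn (fun π k => π (e k)) (fun π hπ => ?_) ?_) hS
  · exact mem_filter.2 ⟨mem_univ _, π.injective.comp e.injective,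
      fun k => (mem_filter.1 hπ).2 (e k)⟩
  · exact fun π _ π' _ h => Equiv.ext (e.surjective.forall.2 (congrFun h))

theorem natCast_sub_max_le {n m k f : ℕ} (hkm : k ≤ m) (hmn : m < n) :
    ((n - max k f : ℕ) : ℝ) ≤ (n - k : ℕ) * Real.exp (k / (n - m) - f / n) := by
  have hn : (0 : ℝ) < n := by exact_mod_cast (Nat.zero_le m).trans_lt hmn
  have hm : (m : ℝ) < n := by exact_mod_cast hmn
  have hk : (k : ℝ) ≤ m := by exact_mod_cast hkm
  have hforbidden : ((n - max k f : ℕ) : ℝ) ≤ n * Real.exp (-(f / n)) := by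
    rcases le_total (max k f) n with h | h
    · calc ((n - max k f : ℕ) : ℝ) ≤ n - f := by
            rw [Nat.cast_sub h]; push_cast; gcongr; exact le_max_right _ _
        _ = n * (1 - f / n) := by field_simp
        _ ≤ n * Real.exp (-(f / n)) := by gcongr; exact Real.one_sub_le_exp_neg _
    · rw [Nat.sub_eq_zero_of_le h, Nat.cast_zero]; positivity
  have hused : (n : ℝ) ≤ (n - k) * Real.exp (k / (n - m)) := by
    have hnk : (0 : ℝ) < n - k := by linarith
    calc (n : ℝ) = (n - k) * (k / (n - k) + 1) := by field_simp; ring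
      _ ≤ (n - k) * (k / (n - m) + 1) := by gcongr
      _ ≤ (n - k) * Real.exp (k / (n - m)) := by gcongr; exact Real.add_one_le_exp _
  calc ((n - max k f : ℕ) : ℝ) ≤ n * Real.exp (-(f / n)) := hforbidden
    _ ≤ (n - k) * Real.exp (k / (n - m)) * Real.exp (-(f / n)) := by gcongr
    _ = (n - k : ℕ) * Real.exp (k / (n - m) - f / n) := by
      rw [Nat.cast_sub (hkm.trans hmn.le), mul_assoc, ← Real.exp_add, ← sub_eq_add_neg]

theorem prod_sub_val_eq_factorial (n : ℕ) : ∏ k : Fin n, (n - (k : ℕ)) = n.factorial := by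
  rw [Fin.prod_univ_eq_prod_range (n - ·), ← Nat.descFactorial_eq_prod_range,
    Nat.descFactorial_self]

theorem sum_val_filter_val_lt_le (n m : ℕ) :
    ∑ k ∈ {k : Fin n | (k : ℕ) < m}, (k : ℝ) ≤ (m : ℝ) ^ 2 / 2 := by
  have hrange : ∑ k ∈ {k : Fin n | (k : ℕ) < m}, (k : ℕ) ≤ ∑ k ∈ range m, k := by
    rw [← sum_image (f := fun k => k) Fin.val_injective.injOn]
    exact sum_le_sum_of_subset (image_subset_iff.2 fun k hk => mem_range.2 (mem_filter.1 hk).2)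
  have hgauss : (∑ k ∈ range m, k) * 2 ≤ m ^ 2 := by
    rw [sum_range_id_mul_two, sq]
    exact Nat.mul_le_mul_left m (Nat.sub_le m 1)
  rw [le_div_iff₀ two_pos]
  exact_mod_cast (Nat.mul_le_mul_right 2 hrange).trans hgauss

-- Reveal `π` at the `m` positions with many forbidden values first: there the forbidden values are
-- excluded, at the remaining positions the values already used.
theorem card_perm_avoiding_le {n m : ℕ} (hm : m < n) (F : Fin n → Finset (Fin n)) :
    (#{π : Equiv.Perm (Fin n) | ∀ j, π j ∉ F j} : ℝ) ≤
      n.factorial * Real.exp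
        ((m : ℝ) ^ 2 / (2 * (n - m)) - m / (n : ℝ) ^ 2 * ∑ j, (#(F j) : ℝ)) := by
  have hn : (0 : ℝ) < n := by exact_mod_cast (Nat.zero_le m).trans_lt hm
  have hnm : (0 : ℝ) < n - m := sub_pos.2 (by exact_mod_cast hm)
  obtain ⟨e, he⟩ := exists_perm_card_mul_sum_le {k : Fin n | (k : ℕ) < m} fun j => (#(F j) : ℝ)
  rw [Fin.card_filter_val_lt, min_eq_right hm.le] at he
  let x : Fin n → ℝ := fun k => if (k : ℕ) < m then (k : ℝ) / (n - m) - #(F (e k)) / n else 0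
  have hfactor (k : Fin n) :
      ((n - max (k : ℕ) #(F (e k)) : ℕ) : ℝ) ≤ (n - k : ℕ) * Real.exp (x k) := by
    by_cases hk : (k : ℕ) < m
    · simpa only [x, if_pos hk] using natCast_sub_max_le hk.le hm
    · simp only [x, if_neg hk, Real.exp_zero, mul_one]
      gcongr
      exact le_max_left _ _
  have hused : (∑ k ∈ {k : Fin n | (k : ℕ) < m}, (k : ℝ)) / (n - m) ≤
      (m : ℝ) ^ 2 / (2 * (n - m)) := by
    rw [← div_div]
    gcongr
    exact sum_val_filter_val_lt_le n m
  have hforbidden : m / (n : ℝ) ^ 2 * ∑ j, (#(F j) : ℝ) ≤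
      (∑ k ∈ {k : Fin n | (k : ℕ) < m}, (#(F (e k)) : ℝ)) / n := by
    rw [div_mul_eq_mul_div, div_le_div_iff₀ (by positivity) hn]
    nlinarith
  have hexponent :
      ∑ k, x k ≤ (m : ℝ) ^ 2 / (2 * (n - m)) - m / (n : ℝ) ^ 2 * ∑ j, (#(F j) : ℝ) := by
    simp only [x, ← sum_filter, sum_sub_distrib, ← sum_div]
    exact sub_le_sub hused hforbidden
  calc (#{π : Equiv.Perm (Fin n) | ∀ j, π j ∉ F j} : ℝ)
      ≤ ∏ k : Fin n, ((n - max (k : ℕ) #(F (e k)) : ℕ) : ℝ) := by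
        exact_mod_cast card_perm_avoiding_le_prod F e
    _ ≤ ∏ k : Fin n, ((n - k : ℕ) * Real.exp (x k)) := by gcongr with k; exact hfactor k
    _ = n.factorial * Real.exp (∑ k, x k) := by
        rw [prod_mul_distrib, ← Nat.cast_prod, prod_sub_val_eq_factorial, Real.exp_sum]
    _ ≤ _ := by gcongr

/-! ### Tuples of permutations compatible with a timing -/

theorem sq_card_le_card_mul_card_eq {α β : Type*} [Fintype α] [DecidableEq β] (f : α → β)
    {s : Finset β} (hs : ∀ a, f a ∈ s) :
    Fintype.card α ^ 2 ≤ #s * #{p : α × α | f p.1 = f p.2} := by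
  have hpoints : Fintype.card α = ∑ t ∈ s, #{a | f a = t} :=
    card_eq_sum_card_fiberwise fun a _ => hs a
  have hpairs : #{p : α × α | f p.1 = f p.2} = ∑ t ∈ s, #{a | f a = t} ^ 2 := by
    rw [card_eq_sum_card_fiberwise (f := fun p => f p.1) fun p _ => hs p.1]
    refine sum_congr rfl fun t _ => ?_
    rw [sq, ← card_product]
    congr 1
    ext p
    simp only [mem_filter, mem_univ, true_and, mem_product]
    grind
  rw [hpoints, hpairs]
  exact sq_sum_le_card_mul_sum_sq

section Timing

variable {N n : ℕ} {τ : Fin N → Fin n → ℕ}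

/-- The tuple `πs` is compatible with the timing `τ`, where `τ i j` is the time at which packet `i`
crosses the `j`-th critical edge of its path: distinct packets never cross the same critical edge
at the same time. -/
def Compatible (τ : Fin N → Fin n → ℕ) (πs : Fin N → Equiv.Perm (Fin n)) : Prop :=
  ∀ a b, a ≠ b → ∀ j j', τ a j = τ b j' → πs a j ≠ πs b j'

instance : DecidablePred (Compatible τ) := by unfold Compatible; infer_instance

/-- The crossings `(i', j')` by packets `i' < i` that take place at the time `τ i j`. In a
compatible tuple their critical edges are forbidden for packet `i` at position `j`. -/
def earlierConflicts (τ : Fin N → Fin n → ℕ) (i : Fin N) (j : Fin n) : Finset (Fin N × Fin n) :=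
  {q | q.1 < i ∧ τ q.1 q.2 = τ i j}

theorem card_simultaneous_le (hinj : ∀ i, Function.Injective (τ i)) :
    #{p : (Fin N × Fin n) × (Fin N × Fin n) | τ p.1.1 p.1.2 = τ p.2.1 p.2.2} ≤
      N * n + 2 * ∑ i, ∑ j, #(earlierConflicts τ i j) := by
  let E : Finset ((Fin N × Fin n) × (Fin N × Fin n)) :=
    {p | p.2 ∈ earlierConflicts τ p.1.1 p.1.2}
  have hE : #E = ∑ i, ∑ j, #(earlierConflicts τ i j) := by
    rw [card_filter, Fintype.sum_prod_type, Fintype.sum_prod_type]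
    simp
  have hcover : ({p | τ p.1.1 p.1.2 = τ p.2.1 p.2.2} : Finset ((Fin N × Fin n) × (Fin N × Fin n))) ⊆
      univ.diag ∪ (E ∪ E.image Prod.swap) := by
    rintro ⟨⟨a, b⟩, c, d⟩ h
    have hτ : τ a b = τ c d := (mem_filter.1 h).2
    rcases lt_trichotomy a c with hac | rfl | hac
    · simp [E, earlierConflicts, hac, hτ]
    · simp [hinj a hτ]
    · simp [E, earlierConflicts, hac, hτ]
  calc _ ≤ #((univ : Finset (Fin N × Fin n)).diag ∪ (E ∪ E.image Prod.swap)) := card_le_card hcover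
    _ ≤ #(univ : Finset (Fin N × Fin n)).diag + (#E + #(E.image Prod.swap)) :=
        (card_union_le _ _).trans (Nat.add_le_add_left (card_union_le _ _) _)
    _ ≤ N * n + (#E + #E) :=
        add_le_add (by simp) (Nat.add_le_add_left card_image_le _)
    _ = _ := by rw [hE, two_mul]

theorem sq_le_mul_add_two_mul_sum_earlierConflicts {T : ℕ} (hinj : ∀ i, Function.Injective (τ i))
    (hT : ∀ i j, τ i j < T) :
    (N * n) ^ 2 ≤ T * (N * n + 2 * ∑ i, ∑ j, #(earlierConflicts τ i j)) := by
  have h := sq_card_le_card_mul_card_eq (fun p : Fin N × Fin n => τ p.1 p.2)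
    fun p => mem_range.2 (hT p.1 p.2)
  rw [Fintype.card_prod, Fintype.card_fin, Fintype.card_fin, card_range] at h
  exact h.trans (Nat.mul_le_mul_left T (card_simultaneous_le hinj))

theorem Compatible.card_image_earlierConflicts {πs : Fin N → Equiv.Perm (Fin n)}
    (hπs : Compatible τ πs) (hinj : ∀ i, Function.Injective (τ i)) (i : Fin N) (j : Fin n) :
    #((earlierConflicts τ i j).image fun q => πs q.1 q.2) = #(earlierConflicts τ i j) := by
  refine card_image_of_injOn ?_
  rintro ⟨a, b⟩ hab ⟨c, d⟩ hcd hedge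
  have hτ : τ a b = τ c d := (mem_filter.1 hab).2.2.trans (mem_filter.1 hcd).2.2.symm
  obtain rfl : a = c := by
    by_contra hac
    exact hπs a c hac b d hτ hedge
  rw [hinj a hτ]

theorem card_compatible_le {m : ℕ} (hm : m < n) (hinj : ∀ i, Function.Injective (τ i)) :
    (#{πs : Fin N → Equiv.Perm (Fin n) | Compatible τ πs} : ℝ) ≤
      (n.factorial : ℝ) ^ N * Real.exp (N * ((m : ℝ) ^ 2 / (2 * (n - m))) -
        m / (n : ℝ) ^ 2 * ∑ i, ∑ j, (#(earlierConflicts τ i j) : ℝ)) := by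
  let g : Fin N → ℝ := fun i => n.factorial * Real.exp
    ((m : ℝ) ^ 2 / (2 * (n - m)) - m / (n : ℝ) ^ 2 * ∑ j, (#(earlierConflicts τ i j) : ℝ))
  calc (#{πs : Fin N → Equiv.Perm (Fin n) | Compatible τ πs} : ℝ) ≤ ∏ i, g i := by
        refine card_le_prod_of_card_extensions_le _ (fun i => by positivity) fun p hp i => ?_
        have hp : Compatible τ p := (mem_filter.1 hp).2
        have havoid := card_perm_avoiding_le hm
          fun j => (earlierConflicts τ i j).image fun q => p q.1 q.2
        simp only [hp.card_image_earlierConflicts hinj] at havoid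
        refine le_trans (Nat.mono_cast (card_le_card ?_)) havoid
        simp only [image_subset_iff, mem_filter, mem_univ, true_and]
        rintro q ⟨hq, hqp⟩ j hj
        obtain ⟨r, hr, hrj⟩ := mem_image.1 hj
        obtain ⟨hri, hτ⟩ := (mem_filter.1 hr).2
        exact hq r.1 i hri.ne r.2 j hτ (by rw [hqp _ hri, hrj])
    _ = _ := by
        simp only [g, prod_mul_distrib, ← Real.exp_sum, sum_sub_distrib, ← mul_sum, prod_const,
          sum_const, card_univ, Fintype.card_fin, nsmul_eq_mul]

end Timing

-- With `m = n / 8` the conflicts contribute about `-(n / 8) * (n / 8)` and the correction is at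
-- most `(n / 8) * (n / 14)`.
theorem exponent_le {n : ℕ} {S : ℝ} (hn : 100 ≤ n)
    (hS : ((n : ℝ) * n) ^ 2 ≤ 4 * n * (n * n + 2 * S)) :
    n * (((n / 8 : ℕ) : ℝ) ^ 2 / (2 * (n - (n / 8 : ℕ)))) - (n / 8 : ℕ) / (n : ℝ) ^ 2 * S ≤
      -(n : ℝ) ^ 2 / 200 := by
  have hnR : (100 : ℝ) ≤ n := by exact_mod_cast hn
  have hm_le : ((n / 8 : ℕ) : ℝ) ≤ n / 8 := by exact_mod_cast Nat.cast_div_le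
  have hm_ge : (n : ℝ) / 8 - 1 ≤ (n / 8 : ℕ) := by
    have hfloor : (n : ℝ) ≤ 8 * (n / 8 : ℕ) + 8 := by
      exact_mod_cast (by omega : n ≤ 8 * (n / 8) + 8)
    linarith
  generalize ((n / 8 : ℕ) : ℝ) = m at hm_le hm_ge ⊢
  have hm : 0 ≤ m := by linarith
  have hconflicts : m * (n / 8 - 1 / 2) ≤ m / (n : ℝ) ^ 2 * S := by
    have hS' : (n / 8 - 1 / 2) * (n : ℝ) ^ 2 ≤ S := by
      have hscaled : 0 ≤ 8 * (n : ℝ) * (S - (n / 8 - 1 / 2) * (n : ℝ) ^ 2) := by linarith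
      exact sub_nonneg.1 (nonneg_of_mul_nonneg_right hscaled (by positivity))
    calc m * (n / 8 - 1 / 2) = m / (n : ℝ) ^ 2 * ((n / 8 - 1 / 2) * (n : ℝ) ^ 2) := by field_simp
      _ ≤ m / (n : ℝ) ^ 2 * S := by gcongr
  have hcorrection : n * (m ^ 2 / (2 * (n - m))) ≤ m * (n / 14) := by
    rw [mul_div_assoc', div_le_iff₀ (by linarith)]
    have hslack : 0 ≤ (n : ℝ) * m * (n - 8 * m) := mul_nonneg (by positivity) (by linarith)
    nlinarith
  have hmain : (n / 8 - 1) * (3 * n / 56 - 1 / 2) ≤ m * (3 * (n : ℝ) / 56 - 1 / 2) := by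
    gcongr
    linarith
  nlinarith

theorem card_compatible_le_exp {n T : ℕ} (hn : 100 ≤ n) (hTn : T ≤ 4 * n)
    {τ : Fin n → Fin n → ℕ} (hinj : ∀ i, Function.Injective (τ i)) (hT : ∀ i j, τ i j < T) :
    (#{πs : Fin n → Equiv.Perm (Fin n) | Compatible τ πs} : ℝ) ≤
      (n.factorial : ℝ) ^ n * Real.exp (-(n : ℝ) ^ 2 / 200) := by
  refine (card_compatible_le (m := n / 8) (by omega) hinj).trans ?_
  gcongr
  refine exponent_le hn ?_
  exact_mod_cast (sq_le_mul_add_two_mul_sum_earlierConflicts hinj hT).trans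
    (Nat.mul_le_mul_right _ hTn)

/-! ### Crossing times of a schedule -/

/-- The step in which the counter `s` passes from `p` to `p + 1`, if it starts at `0`, grows by at
most `1` per step and exceeds `p` at some time; otherwise a junk value. -/
noncomputable def crossingTime (s : ℕ → ℕ) (p : ℕ) : ℕ := sInf {t | p < s (t + 1)}

theorem crossingTime_lt {s : ℕ → ℕ} {T p : ℕ} (h0 : s 0 = 0) (hp : p < s T) :
    crossingTime s p < T := by
  cases T with
  | zero => omega
  | succ T => exact Nat.lt_succ_of_le (Nat.sInf_le hp)

theorem apply_crossingTime {s : ℕ → ℕ} {T p : ℕ} (h0 : s 0 = 0)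
    (hs : ∀ t, s (t + 1) = s t ∨ s (t + 1) = s t + 1) (hp : p < s T) :
    s (crossingTime s p) = p ∧ s (crossingTime s p + 1) = p + 1 := by
  have hbefore : s (crossingTime s p) ≤ p :=
    not_lt.1 fun h => (crossingTime_lt h0 h).false
  have hafter : p < s (crossingTime s p + 1) := by
    cases T with
    | zero => omega
    | succ T => exact Nat.sInf_mem (s := {t | p < s (t + 1)}) ⟨T, hp⟩
  have hstep := hs (crossingTime s p)
  omega

namespace RInst

variable {I : RInst} {σ : Fin I.k → ℕ → ℕ} {T : ℕ} {i i' : Fin I.k} {p p' : ℕ} {e : I.E}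

theorem CompletedBy.mono {T' : ℕ} (hT : I.CompletedBy σ T) (hσ : I.IsSchedule σ) (h : T ≤ T') :
    I.CompletedBy σ T' := by
  intro i
  have hmono : Monotone (σ i) := monotone_nat_of_le_succ fun t => by
    rcases hσ.2.1 i t with h | h <;> omega
  exact (hσ.2.2 i T').antisymm ((hT i).symm.le.trans (hmono h))

theorem LoadLE.eq_of_crosses {t : ℕ} (hload : I.LoadLE σ 1) (h : I.Crosses σ i e t)
    (h' : I.Crosses σ i' e t) : i = i' := by
  have := Finite.card_le_one_iff_subsingleton.1 (hload e t)
  exact congrArg Subtype.val (Subsingleton.elim (⟨i, h⟩ : {i | I.Crosses σ i e t}) ⟨i', h'⟩)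

theorem IsSchedule.crossingTime_lt_of_completedBy (hσ : I.IsSchedule σ) (hT : I.CompletedBy σ T)
    (hp : p < (I.path i).length) : crossingTime (σ i) p < T :=
  crossingTime_lt (hσ.1 i) (by rwa [hT i])

theorem IsSchedule.crossingTime_lt_crossingTime_succ (hσ : I.IsSchedule σ)
    (hT : I.CompletedBy σ T) (hp : p + 1 < (I.path i).length) :
    crossingTime (σ i) p < crossingTime (σ i) (p + 1) := by
  have h := (apply_crossingTime (hσ.1 i) (hσ.2.1 i) (hp.trans_eq (hT i).symm)).1
  exact crossingTime_lt (hσ.1 i) (by rw [h]; exact p.lt_succ_self)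

theorem IsSchedule.crosses_crossingTime (hσ : I.IsSchedule σ) (hT : I.CompletedBy σ T)
    (hp : (I.path i)[p]? = some e) : I.Crosses σ i e (crossingTime (σ i) p) := by
  have hlen : p < (I.path i).length := (List.getElem?_eq_some_iff.1 hp).1
  have h := apply_crossingTime (hσ.1 i) (hσ.2.1 i) (hlen.trans_eq (hT i).symm)
  rw [Crosses, h.1, h.2]
  exact ⟨rfl, hp⟩

theorem IsSchedule.eq_of_crossingTime_eq (hσ : I.IsSchedule σ) (hT : I.CompletedBy σ T)
    (hload : I.LoadLE σ 1) (hp : (I.path i)[p]? = some e) (hp' : (I.path i')[p']? = some e)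
    (h : crossingTime (σ i) p = crossingTime (σ i') p') : i = i' :=
  hload.eq_of_crosses (hσ.crosses_crossingTime hT hp) (h ▸ hσ.crosses_crossingTime hT hp')

end RInst

/-! ### The paths of the lower-bound instance -/

theorem getElem?_flatten_ofFn_pair_append {α : Type*} {n : ℕ} (f g : Fin n → α) (l : List α)
    (j : Fin n) : ((List.ofFn fun i => [f i, g i]).flatten ++ l)[2 * (j : ℕ)]? = some (f j) := by
  induction n with
  | zero => exact j.elim0
  | succ n ih =>
    rw [List.ofFn_succ]
    cases j using Fin.cases with
    | zero => simp
    | succ j => simpa [mul_add] using ih (fun i => f i.succ) (fun i => g i.succ) j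

theorem length_flatten_ofFn_pair {α : Type*} {n : ℕ} (f g : Fin n → α) :
    (List.ofFn fun i => [f i, g i]).flatten.length = 2 * n := by
  simp [List.length_flatten, List.map_ofFn, Function.comp_def, mul_comm]

section PathOf

variable {n : ℕ} (π : Equiv.Perm (Fin n))

theorem length_pathOf (hn : 0 < n) : (pathOf π).length = 2 * n + 3 := by
  rw [pathOf, dif_pos hn]
  simp only [List.length_cons, List.length_append, length_flatten_ofFn_pair, List.length_nil]

theorem getElem?_pathOf_zero (hn : 0 < n) : (pathOf π)[0]? = some Edg.start := by
  rw [pathOf, dif_pos hn]; rfl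

theorem getElem?_pathOf_two_mul_add_two (j : Fin n) :
    (pathOf π)[2 * (j : ℕ) + 2]? = some (Edg.crit (π j)) := by
  rw [pathOf, dif_pos (Fin.pos j), List.getElem?_cons_succ, List.getElem?_cons_succ,
    getElem?_flatten_ofFn_pair_append]

theorem getElem?_pathOf_last (hn : 0 < n) : (pathOf π)[2 * n + 2]? = some Edg.toT := by
  rw [pathOf, dif_pos hn, List.getElem?_cons_succ, List.getElem?_cons_succ,
    List.getElem?_append_right (by rw [length_flatten_ofFn_pair]), length_flatten_ofFn_pair,
    Nat.sub_self]
  rfl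

end PathOf

/-! ### The timing of a feasible schedule -/

theorem sum_range_card_le_sum_of_injective {ι : Type*} [Fintype ι] {a : ι → ℕ}
    (ha : a.Injective) : ∑ k ∈ range (Fintype.card ι), k ≤ ∑ i, a i := by
  have hinj : Function.Injective fun i => (a i : ℤ) := Nat.cast_injective.comp ha
  have h := sum_range_le_sum (s := univ.image fun i => (a i : ℤ)) (c := 0) (by simp)
  rw [card_image_of_injective _ hinj, card_univ, sum_image hinj.injOn] at h
  rw [← Nat.cast_le (α := ℤ)]
  push_cast
  simpa only [zero_add] using h

theorem sum_add_sq_card_le_of_injective {ι : Type*} [Fintype ι] {a b : ι → ℕ} {T : ℕ}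
    (ha : a.Injective) (hb : b.Injective) (hT : ∀ i, b i < T) :
    ∑ i, b i + Fintype.card ι ^ 2 ≤ ∑ i, a i + Fintype.card ι * T := by
  let b' : ι → ℕ := fun i => T - 1 - b i
  have hbb' (i : ι) : b i + b' i + 1 = T := by grind
  have hb' : b'.Injective := fun i i' h => hb (by grind)
  have hsum : ∑ i, b i + ∑ i, b' i + Fintype.card ι = Fintype.card ι * T := by
    simpa [sum_add_distrib] using sum_congr rfl fun i (_ : i ∈ univ) => hbb' i
  have hgauss : 2 * ∑ k ∈ range (Fintype.card ι), k + Fintype.card ι = Fintype.card ι ^ 2 := by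
    rw [mul_comm, sum_range_id_mul_two, Nat.mul_sub_one, sq, Nat.sub_add_cancel (Nat.le_mul_self _)]
  have := sum_range_card_le_sum_of_injective ha
  have := sum_range_card_le_sum_of_injective hb'
  omega

theorem partialSum_last {M : Type*} [AddCommMonoid M] {n : ℕ} (f : Fin n → M) :
    Fin.partialSum f (Fin.last n) = ∑ i, f i := by
  rw [Fin.partialSum, Fin.val_last, List.take_of_length_le (by simp), List.sum_ofFn]

/-- The time at which packet `i` crosses the `j`-th critical edge of its path, if it crosses the
first edge of its path at time `a i` and waits for `d (i, k)` steps in all between the crossings of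
the edges at the positions `2 * k` and `2 * k + 2` (counted from `0`) of its path. -/
def timing {N n : ℕ} (a : Fin N → ℕ) (d : Fin N × Fin n → ℕ) (i : Fin N) (j : Fin n) : ℕ :=
  a i + Fin.partialSum (fun k => d (i, k) + 2) j.succ

theorem timing_injective {N n : ℕ} (a : Fin N → ℕ) (d : Fin N × Fin n → ℕ) (i : Fin N) :
    Function.Injective (timing a d i) := by
  have hmono : StrictMono (Fin.partialSum fun k => d (i, k) + 2) :=
    Fin.strictMono_iff_lt_succ.2 fun k => by rw [Fin.partialSum_succ]; omega
  exact (add_right_injective _).comp (hmono.injective.comp (Fin.succ_injective n))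

/-- The number of steps a packet waits between its crossings of the edges at the positions `2 * j`
and `2 * j + 2` of its path, if it crosses the edge at position `p` at time `θ p`. The truncated
subtraction is exact, as crossing two edges takes two steps. -/
def delay (θ : ℕ → ℕ) (j : ℕ) : ℕ := θ (2 * j + 2) - (θ (2 * j) + 2)

section Delay

variable {n : ℕ} {θ : ℕ → ℕ}

theorem add_partialSum_delay (hθ : ∀ j < n, θ (2 * j) + 2 ≤ θ (2 * j + 2)) (j : Fin (n + 1)) :
    θ 0 + Fin.partialSum (fun k : Fin n => delay θ k + 2) j = θ (2 * j) := by
  induction j using Fin.induction with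
  | zero => simp
  | succ j ih =>
    rw [Fin.partialSum_succ, ← add_assoc, ih, delay, add_left_comm, Fin.val_castSucc,
      Nat.sub_add_cancel (hθ j j.2)]
    rfl

theorem sum_delay_add_le (hθ : ∀ j ≤ n, θ (2 * j) + 2 ≤ θ (2 * j + 2)) :
    θ 0 + ∑ j : Fin n, delay θ j + (2 * n + 2) ≤ θ (2 * n + 2) := by
  have h := add_partialSum_delay (fun j hj => hθ j hj.le) (Fin.last n)
  have hlast := hθ n le_rfl
  simp only [partialSum_last, sum_add_distrib, sum_const, card_univ, Fintype.card_fin,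
    smul_eq_mul, Fin.val_last] at h
  omega

end Delay

theorem sum_sum_delay_add_le {N n T : ℕ} {θ : Fin N → ℕ → ℕ}
    (hθ : ∀ i, ∀ j ≤ n, θ i (2 * j) + 2 ≤ θ i (2 * j + 2))
    (hstart : Function.Injective fun i => θ i 0)
    (hend : Function.Injective fun i => θ i (2 * n + 2)) (hT : ∀ i, θ i (2 * n + 2) < T) :
    ∑ p : Fin N × Fin n, delay (θ p.1) p.2 + N * (N + (2 * n + 2)) ≤ N * T := by
  have hends := sum_add_sq_card_le_of_injective hstart hend hT
  have htravel := sum_le_sum fun i (_ : i ∈ univ) => sum_delay_add_le (hθ i)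
  simp only [sum_add_distrib, sum_const, card_univ, Fintype.card_fin, smul_eq_mul]
    at hends htravel
  rw [Fintype.sum_prod_type]
  linarith

theorem exists_timing_of_isSchedule {n T : ℕ} (hn : 0 < n) {πs : Fin n → Equiv.Perm (Fin n)}
    {σ : Fin n → ℕ → ℕ} (hσ : (lowerBoundInstance n πs).IsSchedule σ)
    (hload : (lowerBoundInstance n πs).LoadLE σ 1)
    (hT : (lowerBoundInstance n πs).CompletedBy σ T) :
    ∃ (a : Fin n → ℕ) (d : Fin n × Fin n → ℕ), ∑ p, d p + n * (n + (2 * n + 2)) ≤ n * T ∧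
      (∀ i j, timing a d i j < T) ∧ Compatible (timing a d) πs := by
  let θ : Fin n → ℕ → ℕ := fun i => crossingTime (σ i)
  have hlen (i : Fin n) : ((lowerBoundInstance n πs).path i).length = 2 * n + 3 :=
    length_pathOf (πs i) hn
  have hθT (i : Fin n) {p : ℕ} (hp : p < 2 * n + 3) : θ i p < T :=
    hσ.crossingTime_lt_of_completedBy hT (hp.trans_eq (hlen i).symm)
  have hθ_succ (i : Fin n) {p : ℕ} (hp : p + 1 < 2 * n + 3) : θ i p < θ i (p + 1) :=
    hσ.crossingTime_lt_crossingTime_succ hT (hp.trans_eq (hlen i).symm)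
  have hθ_two (i : Fin n) (j : ℕ) (hj : j ≤ n) : θ i (2 * j) + 2 ≤ θ i (2 * j + 2) :=
    (Nat.succ_le_succ (hθ_succ i (p := 2 * j) (by omega))).trans (hθ_succ i (by omega))
  have hθ_eq {i i' : Fin n} {p p' : ℕ} {e : Edg n} (hp : (pathOf (πs i))[p]? = some e)
      (hp' : (pathOf (πs i'))[p']? = some e) (h : θ i p = θ i' p') : i = i' :=
    hσ.eq_of_crossingTime_eq hT hload hp hp' h
  let a : Fin n → ℕ := fun i => θ i 0
  let d : Fin n × Fin n → ℕ := fun p => delay (θ p.1) p.2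
  have htiming (i j : Fin n) : timing a d i j = θ i (2 * j + 2) :=
    add_partialSum_delay (fun j hj => hθ_two i j hj.le) j.succ
  refine ⟨a, d, sum_sum_delay_add_le hθ_two ?_ ?_ fun i => hθT i (by omega), fun i j => ?_, ?_⟩
  · exact fun i i' => hθ_eq (getElem?_pathOf_zero _ hn) (getElem?_pathOf_zero _ hn)
  · exact fun i i' => hθ_eq (getElem?_pathOf_last _ hn) (getElem?_pathOf_last _ hn)
  · exact (htiming i j).trans_lt (hθT i (by omega))
  · intro i i' hii' j j' h hedge
    rw [htiming, htiming] at h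
    refine hii' (hθ_eq (getElem?_pathOf_two_mul_add_two _ j) ?_ h)
    exact hedge ▸ getElem?_pathOf_two_mul_add_two _ j'

/-! ### Counting timings and the union bound -/

-- Weight each `d` with `x ^ ∑ i, d i`: the total weight is at most a power of a geometric series.
theorem card_mul_pow_mul_one_sub_pow_le_one {ι : Type*} [Fintype ι] {x : ℝ} (hx₀ : 0 ≤ x)
    (hx₁ : x ≤ 1) {B : ℕ} (D : Finset (ι → ℕ)) (hD : ∀ d ∈ D, ∑ i, d i ≤ B) :
    #D * (x ^ B * (1 - x) ^ Fintype.card ι) ≤ 1 := by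
  classical
  have hbox : D ⊆ Fintype.piFinset fun _ => range (B + 1) := fun d hd =>
    Fintype.mem_piFinset.2 fun i => mem_range.2 <| Nat.lt_succ_of_le <|
      (single_le_sum (fun _ _ => Nat.zero_le _) (mem_univ i)).trans (hD d hd)
  have hweight : #D * x ^ B ≤ ∑ d ∈ D, ∏ i, x ^ d i := by
    rw [← nsmul_eq_mul]
    refine card_nsmul_le_sum _ _ _ fun d hd => ?_
    rw [prod_pow_eq_pow_sum]
    exact pow_le_pow_of_le_one hx₀ hx₁ (hD d hd)
  have : 0 ≤ 1 - x := sub_nonneg.2 hx₁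
  calc #D * (x ^ B * (1 - x) ^ Fintype.card ι)
      ≤ (∑ d ∈ D, ∏ i, x ^ d i) * (1 - x) ^ Fintype.card ι := by
        rw [← mul_assoc]
        gcongr
    _ ≤ (∑ d ∈ Fintype.piFinset fun _ : ι => range (B + 1), ∏ i, x ^ d i) *
        (1 - x) ^ Fintype.card ι := by
        gcongr
    _ = ∏ _i : ι, (1 - x ^ (B + 1)) := by
        rw [← prod_univ_sum (fun _ => range (B + 1)) fun _ k => x ^ k, ← card_univ, ← prod_const,
          ← prod_mul_distrib]
        simp only [geom_sum_mul_neg]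
    _ ≤ 1 := prod_le_one (fun _ _ => sub_nonneg.2 (pow_le_one₀ hx₀ hx₁))
        fun _ _ => sub_le_self _ (pow_nonneg hx₀ _)

/-- The start times and delays whose timing stays below `T` and whose total delay is at most `B`.
The ranges are implied by these conditions if `0 < n` and only make the set finite. -/
def profiles (N n T B : ℕ) : Finset ((Fin N → ℕ) × (Fin N × Fin n → ℕ)) :=
  {q ∈ Fintype.piFinset (fun _ => range T) ×ˢ Fintype.piFinset (fun _ => range (B + 1)) |
    ∑ p, q.2 p ≤ B ∧ ∀ i j, timing q.1 q.2 i j < T}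

section Profiles

variable {N n T B : ℕ}

theorem mem_profiles (hn : 0 < n) {q : (Fin N → ℕ) × (Fin N × Fin n → ℕ)} :
    q ∈ profiles N n T B ↔ ∑ p, q.2 p ≤ B ∧ ∀ i j, timing q.1 q.2 i j < T := by
  refine ⟨fun h => (mem_filter.1 h).2, fun h => mem_filter.2 ⟨mem_product.2 ⟨?_, ?_⟩, h⟩⟩
  · exact Fintype.mem_piFinset.2 fun i => mem_range.2 <|
      (Nat.le_add_right _ _).trans_lt (h.2 i ⟨0, hn⟩)
  · exact Fintype.mem_piFinset.2 fun p => mem_range.2 <| Nat.lt_succ_of_le <|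
      (single_le_sum (fun _ _ => Nat.zero_le _) (mem_univ p)).trans h.1

theorem card_profiles_mul_le {x : ℝ} (hx₀ : 0 ≤ x) (hx₁ : x ≤ 1) :
    #(profiles N n T B) * (x ^ B * (1 - x) ^ (N * n)) ≤ (T : ℝ) ^ N := by
  let D : Finset (Fin N × Fin n → ℕ) := (profiles N n T B).image Prod.snd
  have hD : #D * (x ^ B * (1 - x) ^ (N * n)) ≤ 1 := by
    simpa using card_mul_pow_mul_one_sub_pow_le_one hx₀ hx₁ D
      (forall_mem_image.2 fun q hq => (mem_filter.1 hq).2.1)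
  have hprofiles : #(profiles N n T B) ≤ T ^ N * #D := by
    have hsub : profiles N n T B ⊆ Fintype.piFinset (fun _ => range T) ×ˢ D := fun q hq =>
      mem_product.2 ⟨(mem_product.1 (mem_filter.1 hq).1).1, mem_image_of_mem _ hq⟩
    simpa using card_le_card hsub
  have : 0 ≤ 1 - x := sub_nonneg.2 hx₁
  calc #(profiles N n T B) * (x ^ B * (1 - x) ^ (N * n))
      ≤ (T ^ N * #D) * (x ^ B * (1 - x) ^ (N * n)) := by gcongr; exact_mod_cast hprofiles
    _ ≤ (T : ℝ) ^ N := by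
        rw [mul_assoc]
        exact mul_le_of_le_one_right (by positivity) hD

end Profiles

theorem card_profiles_le_exp {n T B : ℕ} (hT : (T : ℝ) ≤ Real.exp (n / 1000))
    (hB : (B : ℝ) ≤ 0.000032 * n ^ 2) :
    (#(profiles n n T B) : ℝ) ≤ Real.exp ((n : ℝ) ^ 2 / 250) := by
  have hx : Real.exp (-50) ≤ 1 / 1000 := by
    rw [Real.exp_neg, ← one_div]
    gcongr
    linarith [Real.quadratic_le_exp_of_nonneg (x := 50) (by norm_num)]
  have hx' : Real.exp (-(1 / 999)) ≤ 1 - 1 / 1000 := by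
    rw [Real.exp_neg, inv_le_comm₀ (Real.exp_pos _) (by norm_num)]
    linarith [Real.add_one_le_exp (1 / 999)]
  have hweight : Real.exp (-(0.0016 * n ^ 2) - n ^ 2 / 999) ≤
      (1 / 1000) ^ B * (1 - 1 / 1000) ^ (n * n) := by
    calc Real.exp (-(0.0016 * n ^ 2) - n ^ 2 / 999)
        ≤ Real.exp (B * (-50) + (n * n : ℕ) * (-(1 / 999))) := by
          gcongr
          push_cast
          linarith
      _ = Real.exp (-50) ^ B * Real.exp (-(1 / 999)) ^ (n * n) := by
          rw [Real.exp_add, Real.exp_nat_mul, Real.exp_nat_mul]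
      _ ≤ _ := by gcongr
  have hstarts : (T : ℝ) ^ n ≤ Real.exp (n ^ 2 / 1000) := by
    calc (T : ℝ) ^ n ≤ Real.exp (n / 1000) ^ n := by gcongr
      _ = Real.exp (n ^ 2 / 1000) := by rw [← Real.exp_nat_mul]; ring_nf
  have hcard : (#(profiles n n T B) : ℝ) * Real.exp (-(0.0016 * n ^ 2) - n ^ 2 / 999) ≤
      Real.exp (n ^ 2 / 1000) :=
    (mul_le_mul_of_nonneg_left hweight (Nat.cast_nonneg _)).trans
      ((card_profiles_mul_le (by norm_num) (by norm_num)).trans hstarts)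
  rw [← le_div_iff₀ (Real.exp_pos _), ← Real.exp_sub] at hcard
  refine hcard.trans (Real.exp_le_exp.2 ?_)
  nlinarith [sq_nonneg (n : ℝ)]

/-- There is a feasible schedule of load at most `1` and makespan at most `T`. -/
def RInst.SchedulableBy (I : RInst) (T : ℕ) : Prop :=
  ∃ σ, I.IsSchedule σ ∧ I.LoadLE σ 1 ∧ I.CompletedBy σ T

theorem card_schedulableBy_le_sum {n T B : ℕ} (hn : 0 < n)
    (hB : n * T ≤ B + n * (n + (2 * n + 2))) :
    Nat.card {πs : Fin n → Equiv.Perm (Fin n) // (lowerBoundInstance n πs).SchedulableBy T} ≤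
      ∑ q ∈ profiles n n T B,
        #{πs : Fin n → Equiv.Perm (Fin n) | Compatible (timing q.1 q.2) πs} := by
  classical
  rw [Nat.card_eq_fintype_card, Fintype.card_subtype]
  refine le_trans (card_le_card fun πs hπs => ?_) card_biUnion_le
  obtain ⟨σ, hσ, hload, hT⟩ := (mem_filter.1 hπs).2
  obtain ⟨a, d, hd, hlt, hcompat⟩ := exists_timing_of_isSchedule hn hσ hload hT
  have hdB : ∑ p, d p ≤ B := by omega
  exact mem_biUnion.2 ⟨(a, d), (mem_profiles hn).2 ⟨hdB, hlt⟩,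
    mem_filter.2 ⟨mem_univ _, hcompat⟩⟩

theorem card_schedulableBy_le_exp {n T : ℕ} (hn : 100 ≤ n) (hT : (T : ℝ) ≤ 3.000032 * n)
    (hexp : 4 * (n : ℝ) ≤ Real.exp (n / 1000)) :
    (Nat.card {πs : Fin n → Equiv.Perm (Fin n) //
        (lowerBoundInstance n πs).SchedulableBy T} : ℝ) ≤
      Real.exp (-(1 / 1000) * (n : ℝ) ^ 2) * (n.factorial : ℝ) ^ n := by
  have hT4 : (T : ℝ) ≤ 4 * n := hT.trans (by gcongr; norm_num)
  let B : ℕ := ⌊0.000032 * (n : ℝ) ^ 2⌋₊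
  have hB : n * T ≤ B + n * (n + (2 * n + 2)) := by
    have hfloor : 0.000032 * (n : ℝ) ^ 2 < B + 1 := Nat.lt_floor_add_one _
    have hreal : (n : ℝ) * T < B + 1 + 3 * n ^ 2 := by
      have := mul_le_mul_of_nonneg_left hT n.cast_nonneg
      linarith
    have hnat : n * T < B + 1 + 3 * n ^ 2 := by exact_mod_cast hreal
    linarith
  have hprofiles : (#(profiles n n T B) : ℝ) ≤ Real.exp ((n : ℝ) ^ 2 / 250) :=
    card_profiles_le_exp (hT4.trans hexp) (Nat.floor_le (by positivity))
  have hcompatible : ∀ q ∈ profiles n n T B,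
      (#{πs : Fin n → Equiv.Perm (Fin n) | Compatible (timing q.1 q.2) πs} : ℝ) ≤
        (n.factorial : ℝ) ^ n * Real.exp (-(n : ℝ) ^ 2 / 200) := fun q hq =>
    card_compatible_le_exp hn (by exact_mod_cast hT4) (timing_injective q.1 q.2)
      ((mem_profiles (by omega)).1 hq).2
  calc (Nat.card {πs : Fin n → Equiv.Perm (Fin n) //
        (lowerBoundInstance n πs).SchedulableBy T} : ℝ)
      ≤ ∑ q ∈ profiles n n T B,
          (#{πs : Fin n → Equiv.Perm (Fin n) | Compatible (timing q.1 q.2) πs} : ℝ) := by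
        exact_mod_cast card_schedulableBy_le_sum (by omega) hB
    _ ≤ #(profiles n n T B) * ((n.factorial : ℝ) ^ n * Real.exp (-(n : ℝ) ^ 2 / 200)) := by
        simpa using sum_le_card_nsmul _ _ _ hcompatible
    _ ≤ Real.exp ((n : ℝ) ^ 2 / 250) *
          ((n.factorial : ℝ) ^ n * Real.exp (-(n : ℝ) ^ 2 / 200)) := by gcongr
    _ = Real.exp (-(1 / 1000) * (n : ℝ) ^ 2) * (n.factorial : ℝ) ^ n := by
        rw [mul_left_comm, ← Real.exp_add, mul_comm]
        ring_nf

theorem eventually_const_mul_natCast_le_exp_div (a : ℝ) {b : ℝ} (hb : 0 < b) :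
    ∀ᶠ n : ℕ in atTop, a * n ≤ Real.exp (n / b) := by
  have h := ((isLittleO_pow_exp_pos_mul_atTop 1 (inv_pos.2 hb)).const_mul_left a).bound one_pos
  filter_upwards [tendsto_natCast_atTop_atTop.eventually h] with n hn
  rw [pow_one, one_mul, Real.norm_of_nonneg (Real.exp_pos _).le, ← div_eq_inv_mul] at hn
  exact (le_abs_self _).trans hn

/-- There are constants `c > 0` and `n₀` such that for all
`n ≥ n₀`: if `π₁,…,π_n` are independent uniformly random permutations of
`{1,…,n}` (i.e. a uniform element of the product of permutation groups), then
with probability at least `1 − e^{−c·n²}` the instance `I(π₁,…,π_n)` admits no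
feasible schedule (load at most `1`) with makespan at most `3.000032·n` — even
though packets may wait arbitrarily long at any node. Equivalently, the number
of tuples `(π₁,…,π_n)` admitting such a schedule is at most an `e^{−c·n²}`
fraction of all tuples. -/
theorem random_instance_has_no_fast_schedule :
    ∃ c : ℝ, 0 < c ∧ ∃ n₀ : ℕ, ∀ n : ℕ, n₀ ≤ n →
      (Nat.card {πs : Fin n → Equiv.Perm (Fin n) //
          ∃ σ : Fin (lowerBoundInstance n πs).k → ℕ → ℕ,
            (lowerBoundInstance n πs).IsSchedule σ ∧
            (lowerBoundInstance n πs).LoadLE σ 1 ∧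
            ∃ T : ℕ, (T : ℝ) ≤ 3.000032 * n ∧
              (lowerBoundInstance n πs).CompletedBy σ T} : ℝ)
        ≤ Real.exp (-c * (n : ℝ) ^ 2) *
            (Nat.card (Fin n → Equiv.Perm (Fin n)) : ℝ) := by
  obtain ⟨n₀, hn₀⟩ := eventually_atTop.1
    (eventually_const_mul_natCast_le_exp_div 4 (b := 1000) (by norm_num))
  refine ⟨1 / 1000, by norm_num, max 100 n₀, fun n hn => ?_⟩
  have hfast := card_schedulableBy_le_exp (le_of_max_le_left hn)
    (Nat.floor_le (by positivity)) (hn₀ n (le_of_max_le_right hn))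
  have htotal : Nat.card (Fin n → Equiv.Perm (Fin n)) = n.factorial ^ n := by
    simp [Fintype.card_perm]
  rw [htotal, Nat.cast_pow]
  refine le_trans (Nat.cast_le.2 (Nat.card_le_card_of_injective
    (Subtype.map id ?_) (Subtype.map_injective _ Function.injective_id))) hfast
  rintro πs ⟨σ, hσ, hload, T, hT, hcompleted⟩
  exact ⟨σ, hσ, hload, hcompleted.mono hσ (Nat.le_floor hT)⟩
end

section
/- For every ε > 0 and every δ > 0 there exists n₀ ∈ ℕ such that for all n ≥ n₀, the number of candidate routing matrices for parameters ε and n is at most 2^{(Φ(ε)+δ)·n²}. -/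
/-!
A candidate matrix is determined by its parking times (column `0`) and its waiting times (the other
`n (n + 1)` entries). There are at most `⌊(3 + ε) n⌋ + 1` choices for each parking time, which
contributes only `2 ^ O(n log n)`. The waiting times have total at most `ε n²`: as `n` distinct
naturals at most `(3 + ε) n`, the arrival times sum to at most `(3 + ε) n² - n (n - 1) / 2`; as `n`
distinct naturals, the parking times sum to at least `n (n - 1) / 2`; and the `2 n + 3` unit steps
of each packet use up `2 n² + 3 n` of the difference.

Functions `f : ι → ℕ` of average at most `ε` are counted with a generating function: for `0 < x < 1`
the weights `x ^ ∑ i, f i` of all functions add up to `(1 - x)⁻¹ ^ |ι|`, and each function counted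
has weight at least `x ^ (ε |ι|)`. The optimal `x = ε / (1 + ε)` gives exactly `2 ^ (Φ(ε) |ι|)`; for
the waiting times `|ι| = n (n + 1)`, which is `n²` up to lower order.
-/

/-- The binary entropy function `H(δ) = δ·log₂(1/δ) + (1−δ)·log₂(1/(1−δ))`. -/
noncomputable def binEntropy (x : ℝ) : ℝ :=
  x * Real.logb 2 (1 / x) + (1 - x) * Real.logb 2 (1 / (1 - x))

/-- `Φ(x) = (1+x)·H(x/(1+x))`. -/
noncomputable def Phi (x : ℝ) : ℝ := (1 + x) * binEntropy (x / (1 + x))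

/-- The arrival time `F_i = W_{i,0} + (2n+3) + Σ_{j=1}^{n+1} W_{i,j}` of packet `i`
under the routing matrix `W` (columns indexed by `Fin (n+2)`, column `0` being the
parking time at the source). -/
def arrivalTime {n : ℕ} (W : Fin n → Fin (n + 2) → ℕ) (i : Fin n) : ℕ :=
  W i 0 + (2 * n + 3) + ∑ j ∈ Finset.univ.filter (fun j : Fin (n + 2) => j ≠ 0), W i j

/-- A candidate routing matrix for parameters `ε` and `n`: the parking times
`W_{i,0}` are pairwise distinct, the arrival times `F_i` are pairwise distinct,
and `F_i ≤ (3+ε)·n` for every `i`. -/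
def IsCandidate (ε : ℝ) (n : ℕ) (W : Fin n → Fin (n + 2) → ℕ) : Prop :=
  Function.Injective (fun i => W i 0) ∧
  Function.Injective (arrivalTime W) ∧
  ∀ i, (arrivalTime W i : ℝ) ≤ (3 + ε) * n

lemma two_rpow_Phi {ε : ℝ} (hε : 0 < ε) :
    (2 : ℝ) ^ Phi ε = (ε / (1 + ε)) ^ (-ε) * (1 + ε) := by
  have Phi_eq : Phi ε = Real.logb 2 (ε / (1 + ε)) * (-ε) + Real.logb 2 (1 + ε) := by
    have one_sub : 1 - ε / (1 + ε) = 1 / (1 + ε) := by field_simp; ring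
    rw [Phi, binEntropy, one_sub, one_div_one_div, one_div (ε / (1 + ε)), Real.logb_inv]
    field_simp
  rw [Phi_eq, Real.rpow_add two_pos, Real.rpow_mul two_pos.le,
    Real.rpow_logb two_pos (by norm_num) (by positivity),
    Real.rpow_logb two_pos (by norm_num) (by positivity)]

section Counting

variable {ι : Type*} [Fintype ι]

lemma sum_sub_sum_le_of_injective {f g : ι → ℤ} (hf : Function.Injective f)
    (hg : Function.Injective g) {a b : ℤ} (ha : ∀ i, a ≤ f i) (hb : ∀ i, g i ≤ b) :
    ∑ i, g i - ∑ i, f i ≤ Fintype.card ι * (b - a - (Fintype.card ι - 1)) := by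
  have hf_sum : ∑ k ∈ Finset.range (Fintype.card ι), (a + k) ≤ ∑ i, f i := by
    simpa using Finset.sum_range_le_sum (s := Finset.univ.map ⟨f, hf⟩) (c := a) (by simpa using ha)
  have hg_sum : ∑ i, g i ≤ ∑ k ∈ Finset.range (Fintype.card ι), (b - k) := by
    simpa using Finset.sum_le_sum_range (s := Finset.univ.map ⟨g, hg⟩) (c := b) (by simpa using hb)
  have gauss (m : ℕ) :
      ∑ k ∈ Finset.range m, (b - k) - ∑ k ∈ Finset.range m, (a + k) = m * (b - a - (m - 1)) := by
    induction m with
    | zero => simp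
    | succ m ih =>
      rw [Finset.sum_range_succ, Finset.sum_range_succ]
      push_cast
      linarith
  linarith [gauss (Fintype.card ι)]

lemma finite_setOf_sum_le (c : ℝ) : {f : ι → ℕ | ((∑ i, f i : ℕ) : ℝ) ≤ c}.Finite := by
  classical
  refine (Set.finite_Iic fun _ => ⌊c⌋₊).subset fun f hf i => ?_
  exact (Finset.single_le_sum_of_canonicallyOrdered (Finset.mem_univ i)).trans (Nat.le_floor hf)

lemma sum_pow_sum_le (S : Finset (ι → ℕ)) {x : ℝ} (hx₀ : 0 ≤ x) (hx₁ : x < 1) :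
    ∑ f ∈ S, x ^ ∑ i, f i ≤ (1 - x)⁻¹ ^ Fintype.card ι := by
  classical
  have geom_le (T : Finset ℕ) : ∑ a ∈ T, x ^ a ≤ (1 - x)⁻¹ := by
    rw [← tsum_geometric_of_lt_one hx₀ hx₁]
    exact (summable_geometric_of_lt_one hx₀ hx₁).sum_le_tsum T fun a _ => pow_nonneg hx₀ a
  have S_subset : S ⊆ Fintype.piFinset fun i => S.image (· i) := fun f hf =>
    Fintype.mem_piFinset.2 fun i => Finset.mem_image_of_mem (· i) hf
  calc ∑ f ∈ S, x ^ ∑ i, f i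
      ≤ ∑ f ∈ Fintype.piFinset fun i => S.image (· i), x ^ ∑ i, f i :=
        Finset.sum_le_sum_of_subset_of_nonneg S_subset fun _ _ _ => pow_nonneg hx₀ _
    _ = ∏ i, ∑ a ∈ S.image (· i), x ^ a := by
        simp only [Finset.prod_univ_sum, Finset.prod_pow_eq_pow_sum]
    _ ≤ ∏ _i : ι, (1 - x)⁻¹ :=
        Finset.prod_le_prod (fun _ _ => Finset.sum_nonneg fun a _ => pow_nonneg hx₀ a)
          fun i _ => geom_le (S.image (· i))
    _ = (1 - x)⁻¹ ^ Fintype.card ι := by simp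

lemma ncard_setOf_sum_le (c : ℝ) {x : ℝ} (hx₀ : 0 < x) (hx₁ : x < 1) :
    ({f : ι → ℕ | ((∑ i, f i : ℕ) : ℝ) ≤ c}.ncard : ℝ) ≤
      x ^ (-c) * (1 - x)⁻¹ ^ Fintype.card ι := by
  set S := (finite_setOf_sum_le (ι := ι) c).toFinset with hS
  have le_weight : ∀ f ∈ S, x ^ c ≤ x ^ ∑ i, f i := fun f hf => by
    rw [← Real.rpow_natCast]
    exact Real.rpow_le_rpow_of_exponent_ge hx₀ hx₁.le (by simpa [hS] using hf)
  rw [Set.ncard_eq_toFinset_card _ (finite_setOf_sum_le c), Real.rpow_neg hx₀.le, inv_mul_eq_div,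
    le_div_iff₀ (Real.rpow_pos_of_pos hx₀ c), ← nsmul_eq_mul]
  exact (Finset.card_nsmul_le_sum S _ _ le_weight).trans (sum_pow_sum_le S hx₀.le hx₁)

lemma ncard_setOf_sum_le_mul_card {ε : ℝ} (hε : 0 < ε) :
    ({f : ι → ℕ | ((∑ i, f i : ℕ) : ℝ) ≤ ε * Fintype.card ι}.ncard : ℝ) ≤
      2 ^ (Phi ε * Fintype.card ι) := by
  have hx₀ : 0 < ε / (1 + ε) := by positivity
  have hx₁ : ε / (1 + ε) < 1 := by rw [div_lt_one (by positivity)]; linarith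
  have inv_one_sub : (1 - ε / (1 + ε))⁻¹ = 1 + ε := by field_simp; ring
  calc _ ≤ (ε / (1 + ε)) ^ (-(ε * Fintype.card ι)) * (1 + ε) ^ Fintype.card ι := by
        simpa only [inv_one_sub] using ncard_setOf_sum_le (ι := ι) (ε * Fintype.card ι) hx₀ hx₁
    _ = 2 ^ (Phi ε * Fintype.card ι) := by
        rw [← neg_mul, Real.rpow_mul_natCast hx₀.le, ← mul_pow, ← two_rpow_Phi hε,
          ← Real.rpow_mul_natCast two_pos.le]

end Counting

lemma eventually_linear_le_pow (a b : ℝ) {r : ℝ} (hr : 1 < r) :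
    ∀ᶠ n : ℕ in Filter.atTop, a * n + b ≤ r ^ n := by
  have linear_isLittleO : (fun n : ℕ => a * n + b * n ^ 0) =o[Filter.atTop] (fun n => r ^ n) :=
    ((isLittleO_coe_const_pow_of_one_lt hr).const_mul_left a).add
      ((isLittleO_pow_const_const_pow_of_one_lt 0 hr).const_mul_left b)
  filter_upwards [linear_isLittleO.bound one_pos] with n hn
  rw [one_mul, Real.norm_of_nonneg (pow_nonneg (zero_le_one.trans hr.le) n)] at hn
  simpa using (Real.le_norm_self _).trans hn

section Routing

variable {n : ℕ}

/-- The times packet `i` waits at the nodes `u_1, …, u_{n+1}`: all entries of `W` outside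
column `0`, as a single family, where `(i, j)` indexes the wait `W_{i,j+1}`. -/
def waitingTimes (W : Fin n → Fin (n + 2) → ℕ) (p : Fin n × Fin (n + 1)) : ℕ :=
  W p.1 p.2.succ

lemma injective_parkingTimes_waitingTimes :
    Function.Injective fun W : Fin n → Fin (n + 2) → ℕ => ((W · 0), waitingTimes W) := by
  intro W W' h
  obtain ⟨h_park, h_wait⟩ := Prod.mk.inj h
  ext i j
  cases j using Fin.cases with
  | zero => exact congrFun h_park i
  | succ j => exact congrFun h_wait (i, j)

lemma arrivalTime_eq (W : Fin n → Fin (n + 2) → ℕ) (i : Fin n) :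
    arrivalTime W i = W i 0 + (2 * n + 3) + ∑ j, waitingTimes W (i, j) := by
  simp [arrivalTime, waitingTimes, Finset.sum_filter, Fin.sum_univ_succ]

namespace IsCandidate

variable {ε : ℝ} {W : Fin n → Fin (n + 2) → ℕ}

lemma parkingTime_le (hW : IsCandidate ε n W) (i : Fin n) : W i 0 ≤ ⌊(3 + ε) * n⌋₊ := by
  have h_arrival : arrivalTime W i ≤ ⌊(3 + ε) * n⌋₊ := Nat.le_floor (hW.2.2 i)
  rw [arrivalTime_eq] at h_arrival
  omega

lemma sum_waitingTimes_le (hW : IsCandidate ε n W) :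
    ((∑ p, waitingTimes W p : ℕ) : ℝ) ≤ ε * n ^ 2 := by
  obtain ⟨park_inj, arrival_inj, arrival_le⟩ := hW
  have sum_arrival : ∑ i, arrivalTime W i =
      ∑ i, W i 0 + n * (2 * n + 3) + ∑ p, waitingTimes W p := by
    simp [arrivalTime_eq, Finset.sum_add_distrib, Fintype.sum_prod_type]
  have sum_arrival_sub_park : ∑ i, (arrivalTime W i : ℤ) - ∑ i, (W i 0 : ℤ) ≤
      n * (⌊(3 + ε) * n⌋ - (n - 1)) := by
    simpa using sum_sub_sum_le_of_injective (Nat.cast_injective.comp park_inj)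
      (Nat.cast_injective.comp arrival_inj) (fun i => Int.natCast_nonneg (W i 0))
      (fun i => Int.le_floor.2 (by simpa using arrival_le i))
  have sum_wait : ((∑ p, waitingTimes W p : ℕ) : ℤ) ≤ n * (⌊(3 + ε) * n⌋ - 3 * n - 2) := by
    zify at sum_arrival ⊢
    linarith
  calc ((∑ p, waitingTimes W p : ℕ) : ℝ) ≤ n * (⌊(3 + ε) * n⌋ - 3 * n - 2) := by
        exact_mod_cast sum_wait
    _ ≤ n * ((3 + ε) * n - 3 * n) :=
        mul_le_mul_of_nonneg_left (by linarith [Int.floor_le ((3 + ε) * n)]) n.cast_nonneg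
    _ = ε * n ^ 2 := by ring

end IsCandidate

lemma mapsTo_parkingTimes_waitingTimes {ε : ℝ} (hε : 0 ≤ ε) :
    Set.MapsTo (fun W : Fin n → Fin (n + 2) → ℕ => ((W · 0), waitingTimes W))
      {W | IsCandidate ε n W}
      (Set.Iic (fun _ => ⌊(3 + ε) * n⌋₊) ×ˢ
        {V | ((∑ p, V p : ℕ) : ℝ) ≤ ε * Fintype.card (Fin n × Fin (n + 1))}) := by
  intro W hW
  refine ⟨hW.parkingTime_le, hW.sum_waitingTimes_le.trans ?_⟩
  simp only [Fintype.card_prod, Fintype.card_fin, sq, Nat.cast_mul]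
  gcongr
  exact n.le_succ

lemma finite_setOf_isCandidate {ε : ℝ} (hε : 0 ≤ ε) :
    {W : Fin n → Fin (n + 2) → ℕ | IsCandidate ε n W}.Finite :=
  .of_injOn (mapsTo_parkingTimes_waitingTimes hε) injective_parkingTimes_waitingTimes.injOn
    ((Set.finite_Iic _).prod (finite_setOf_sum_le _))

lemma ncard_setOf_isCandidate_le {ε : ℝ} (hε : 0 < ε) :
    ({W : Fin n → Fin (n + 2) → ℕ | IsCandidate ε n W}.ncard : ℝ) ≤
      (⌊(3 + ε) * n⌋₊ + 1) ^ n * 2 ^ (Phi ε * (n * (n + 1))) := by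
  have ncard_le := Set.ncard_le_ncard_of_injOn _ (mapsTo_parkingTimes_waitingTimes (n := n) hε.le)
    injective_parkingTimes_waitingTimes.injOn ((Set.finite_Iic _).prod (finite_setOf_sum_le _))
  have ncard_park : (Set.Iic fun _ : Fin n => ⌊(3 + ε) * n⌋₊).ncard = (⌊(3 + ε) * n⌋₊ + 1) ^ n := by
    simp [Set.ncard_eq_toFinset_card', Pi.card_Iic]
  have ncard_wait := ncard_setOf_sum_le_mul_card (ι := Fin n × Fin (n + 1)) hε
  rw [Set.ncard_prod, ncard_park] at ncard_le
  calc _ ≤ (((⌊(3 + ε) * n⌋₊ + 1) ^ n * _ : ℕ) : ℝ) := Nat.cast_le.2 ncard_le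
    _ ≤ (⌊(3 + ε) * n⌋₊ + 1) ^ n * 2 ^ (Phi ε * Fintype.card (Fin n × Fin (n + 1))) := by
        push_cast at ncard_wait ⊢
        gcongr
    _ = _ := by simp

end Routing

/-- For all `ε > 0` and `δ > 0` there is `n₀` such that for all
`n ≥ n₀` the number of candidate routing matrices for parameters `ε`, `n` is at
most `2^{(Φ(ε)+δ)·n²}`. -/
theorem count_candidate_matrices (ε : ℝ) (hε : 0 < ε) (δ : ℝ) (hδ : 0 < δ) :
    ∃ n₀ : ℕ, ∀ n : ℕ, n₀ ≤ n →
      {W : Fin n → Fin (n + 2) → ℕ | IsCandidate ε n W}.Finite ∧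
      (Nat.card {W : Fin n → Fin (n + 2) → ℕ // IsCandidate ε n W} : ℝ)
        ≤ (2 : ℝ) ^ ((Phi ε + δ) * (n : ℝ) ^ 2) := by
  obtain ⟨n₀, hn₀⟩ := Filter.eventually_atTop.1 <|
    eventually_linear_le_pow ((3 + ε) * 2 ^ Phi ε) (2 ^ Phi ε) (Real.one_lt_rpow one_lt_two hδ)
  refine ⟨n₀, fun n hn => ⟨finite_setOf_isCandidate hε.le, ?_⟩⟩
  have parking_factor_le : (⌊(3 + ε) * n⌋₊ + 1) * (2 : ℝ) ^ Phi ε ≤ (2 ^ δ) ^ n :=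
    calc _ ≤ ((3 + ε) * n + 1) * (2 : ℝ) ^ Phi ε := by
          gcongr
          exact Nat.floor_le (by positivity)
      _ ≤ (2 ^ δ) ^ n := by linarith [hn₀ n hn]
  calc (Nat.card {W : Fin n → Fin (n + 2) → ℕ // IsCandidate ε n W} : ℝ)
      ≤ (⌊(3 + ε) * n⌋₊ + 1) ^ n * 2 ^ (Phi ε * (n * (n + 1))) := ncard_setOf_isCandidate_le hε
    _ = ((⌊(3 + ε) * n⌋₊ + 1) * 2 ^ Phi ε) ^ n * 2 ^ (Phi ε * n ^ 2) := by
        rw [mul_pow, ← Real.rpow_mul_natCast two_pos.le, mul_assoc, ← Real.rpow_add two_pos]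
        ring_nf
    _ ≤ ((2 ^ δ) ^ n) ^ n * 2 ^ (Phi ε * n ^ 2) := by gcongr
    _ = 2 ^ ((Phi ε + δ) * n ^ 2) := by
        rw [← pow_mul, ← Real.rpow_mul_natCast two_pos.le, ← Real.rpow_add two_pos]
        push_cast
        ring_nf
end
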